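/- Let φ : ℝ → ℝ be differentiable with ‖φ‖_∞ ≤ C and ‖φ'‖_∞ ≤ C, let n = max(k, m) ≥ 3, let v, v' ∈ ℝ^k satisfy ‖v‖² = ‖v'‖² = k, let M be distributed according to the Haar measure on SO(n), and let V = √(n/k)·M₀ where M₀ is the top-left m×k submatrix of M. Define g(x, x') = (1/m) φ(x)ᵀ φ(x'). Then for every r ≥ 0, P(|g(Vv, Vv') − E[g(Vv, Vv')]| ≥ r) ≤ 2 exp(−r²(n−2)m/(32 n C⁴)). -/

import Mathlib

open MeasureTheory ProbabilityTheory Matrix Kronecker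
open scoped ENNReal NNReal

noncomputable section

instance {m n : Type*} : MeasurableSpace (Matrix m n ℝ) :=
  show MeasurableSpace (m → n → ℝ) from inferInstance

/-- `μ` is the Haar probability measure on the group `O(n)` of `n × n` real orthogonal
matrices: it is a probability measure, it is supported on orthogonal matrices, and it is
invariant under (left) translation by any orthogonal matrix. -/
def IsHaarO (n : ℕ) (μ : Measure (Matrix (Fin n) (Fin n) ℝ)) : Prop :=
  IsProbabilityMeasure μ ∧
  (∀ᵐ M ∂μ, Mᵀ * M = 1) ∧
  ∀ Q : Matrix (Fin n) (Fin n) ℝ, Qᵀ * Q = 1 → μ.map (fun M => Q * M) = μ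

/-- `μ` is the Haar probability measure on `SO(n)`: a probability measure supported on
orthogonal matrices of determinant one, invariant under left translation by `SO(n)`. -/
def IsHaarSO (n : ℕ) (μ : Measure (Matrix (Fin n) (Fin n) ℝ)) : Prop :=
  IsProbabilityMeasure μ ∧
  (∀ᵐ M ∂μ, Mᵀ * M = 1 ∧ M.det = 1) ∧
  ∀ Q : Matrix (Fin n) (Fin n) ℝ, Qᵀ * Q = 1 → Q.det = 1 →
    μ.map (fun M => Q * M) = μ

/-- The map taking an `n × n` matrix to `√(n/k)` times its top-left `m × k` submatrix. -/
def suoOfHaar {m k n : ℕ} (hm : m ≤ n) (hk : k ≤ n)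
    (M : Matrix (Fin n) (Fin n) ℝ) : Matrix (Fin m) (Fin k) ℝ :=
  Real.sqrt ((n : ℝ) / (k : ℝ)) • M.submatrix (Fin.castLE hm) (Fin.castLE hk)

/-- `ν` is the scaled-corrected uniform orthogonal (SUO) distribution on `m × k` matrices:
the law of `√(n/k) • W₀` where `n = max k m` and `W₀` is the top-left `m × k` submatrix of
a Haar-distributed `n × n` orthogonal matrix. -/
def IsSUO (m k : ℕ) (ν : Measure (Matrix (Fin m) (Fin k) ℝ)) : Prop :=
  ∃ μ : Measure (Matrix (Fin (max k m)) (Fin (max k m)) ℝ),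
    IsHaarO (max k m) μ ∧
    ν = μ.map (suoOfHaar (le_max_right k m) (le_max_left k m))

/-- The kernel function `κ_f(z, z') = (1/m) f(z)ᵀ f(z')` of the combined layer
`f(z) = φ(W z)`, with `φ` applied elementwise. -/
def kernelF {m k : ℕ} (φ : ℝ → ℝ) (W : Matrix (Fin m) (Fin k) ℝ)
    (z z' : Fin k → ℝ) : ℝ :=
  (∑ i, φ (W.mulVec z i) * φ (W.mulVec z' i)) / (m : ℝ)

/-- The input covariance matrix `Σ_{z,z'} = (1/k) [[zᵀz, zᵀz'], [z'ᵀz, z'ᵀz']]`. -/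
def covMat {k : ℕ} (z z' : Fin k → ℝ) : Matrix (Fin 2) (Fin 2) ℝ :=
  (k : ℝ)⁻¹ • !![z ⬝ᵥ z, z ⬝ᵥ z'; z' ⬝ᵥ z, z' ⬝ᵥ z']

/-- The approximate kernel function `κ̃_f(Σ) = E_{u ∼ N(0, Σ)}[φ(u₁) φ(u₂)]`, realized by
pushing a pair of independent standard Gaussians through the Cholesky factor of `Σ`. -/
def approxKernel (φ : ℝ → ℝ) (S : Matrix (Fin 2) (Fin 2) ℝ) : ℝ :=
  ∫ p : ℝ × ℝ,
      φ (Real.sqrt (S 0 0) * p.1) *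
      φ ((S 1 0 / Real.sqrt (S 0 0)) * p.1 +
          Real.sqrt (S 1 1 - (S 1 0) ^ 2 / S 0 0) * p.2)
    ∂((gaussianReal 0 1).prod (gaussianReal 0 1))

/-- `γ` is the law of a centered (jointly) Gaussian random vector indexed by `ι` with
covariance matrix `A`: every linear functional of it is a centered real Gaussian with the
corresponding variance. -/
def IsGaussianLaw {ι : Type*} [Fintype ι] (A : Matrix ι ι ℝ)
    (γ : Measure (ι → ℝ)) : Prop :=
  IsProbabilityMeasure γ ∧
  ∀ l : ι → ℝ,
    γ.map (fun y => ∑ i, l i * y i) =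
      gaussianReal 0 (Real.toNNReal (∑ i, ∑ j, l i * A i j * l j))

/-- The Frobenius (Hilbert–Schmidt) norm of a matrix. -/
def frobNorm {m n : ℕ} (M : Matrix (Fin m) (Fin n) ℝ) : ℝ :=
  Real.sqrt (∑ i, ∑ j, (M i j) ^ 2)

/-- The `ℓ²` operator norm of a square matrix. -/
def opNorm {d : ℕ} (A : Matrix (Fin d) (Fin d) ℝ) : ℝ :=
  ‖Matrix.toEuclideanCLM (𝕜 := ℝ) A‖

end

/-!
Let `Δ` be the Casimir operator of the rotation group, acting on polynomials in the matrix entries,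
and let `Γ` be its carré du champ. Since `Δ` does not raise the degree and is self-adjoint for the
Haar measure, the Poisson equation `Δ u = f - E f` is solvable among polynomials, by projecting `f`
orthogonally onto a finite-dimensional space. Bochner's inequality, whose curvature term is
`(n - 2) Γ(u, u)`, together with the maximum principle applied to `Γ(u, u)`, gives
`Γ(u, u) ≤ sup Γ(f, f) / (n - 2) ^ 2`. Integrating by parts,
`E[(f - E f) exp (t (f - E f))] = -t E[Γ(u, f) exp (t (f - E f))]`, so the logarithmic derivative of
the moment generating function of `f - E f` is at most `t sup Γ(f, f) / (n - 2)`, and `f - E f` is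
sub-Gaussian. Bernstein polynomials preserve both the supremum and the Lipschitz constant of an
activation, which reduces Lipschitz activations to polynomial ones.
-/

section Algebra
variable {ι : Type*}

section
variable [Fintype ι]

/-- The linear vector field `M ↦ A * M`, acting as a derivation on polynomials in the entries of
an `ι × ι` matrix `M`; the variable `X (i, j)` stands for `M i j`. -/
noncomputable def matrixDerivation : Matrix ι ι ℝ →ₗ[ℝ]
    Derivation ℝ (MvPolynomial (ι × ι) ℝ) (MvPolynomial (ι × ι) ℝ) where
  toFun A := MvPolynomial.mkDerivation ℝ fun x => ∑ k, A x.1 k • MvPolynomial.X (k, x.2)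
  map_add' A B := MvPolynomial.derivation_ext fun x => by
    simp [add_smul, Finset.sum_add_distrib]
  map_smul' c A := MvPolynomial.derivation_ext fun x => by
    simp [mul_smul, Finset.smul_sum]

lemma matrixDerivation_X (A : Matrix ι ι ℝ) (x : ι × ι) :
    matrixDerivation A (MvPolynomial.X x) = ∑ k, A x.1 k • MvPolynomial.X (k, x.2) :=
  MvPolynomial.mkDerivation_X ..

lemma lie_matrixDerivation (A B : Matrix ι ι ℝ) :
    ⁅matrixDerivation A, matrixDerivation B⁆ = matrixDerivation (B * A - A * B) := by
  refine MvPolynomial.derivation_ext fun x => ?_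
  have second (A B : Matrix ι ι ℝ) : matrixDerivation A (matrixDerivation B (MvPolynomial.X x)) =
      matrixDerivation (B * A) (MvPolynomial.X x) := by
    simp only [matrixDerivation_X, map_sum, Derivation.map_smul, Finset.smul_sum, smul_smul,
      Matrix.mul_apply, Finset.sum_smul]
    exact Finset.sum_comm
  rw [Derivation.commutator_apply, second, second, map_sub, Derivation.sub_apply]

end

variable [DecidableEq ι]

/-- The infinitesimal rotation in the `(i, j)` coordinate plane. All ordered pairs `(i, j)` are
allowed, so each rotation occurs twice, with opposite signs. -/
def planeGenerator (i j : ι) : Matrix ι ι ℝ := single i j 1 - single j i 1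

lemma planeGenerator_swap (i j : ι) : planeGenerator j i = -planeGenerator i j := by
  simp [planeGenerator]

lemma transpose_planeGenerator (i j : ι) : (planeGenerator i j)ᵀ = -planeGenerator i j := by
  simp [planeGenerator]

variable [Fintype ι]

lemma planeGenerator_commutator (i j k l : ι) :
    planeGenerator k l * planeGenerator i j - planeGenerator i j * planeGenerator k l =
      (if i = l then planeGenerator k j else 0) + (if j = k then planeGenerator l i else 0) +
        (if i = k then planeGenerator j l else 0) + (if j = l then planeGenerator i k else 0) := by
  have single_mul (a b c d : ι) : single a b (1 : ℝ) * single c d (1 : ℝ) =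
      if b = c then single a d 1 else 0 := by
    split_ifs with h
    · simp [h]
    · exact single_mul_single_of_ne _ _ _ _ h _
  simp only [planeGenerator, sub_mul, mul_sub, single_mul, eq_comm (a := l), eq_comm (a := k)]
  split_ifs <;> abel

lemma eq_half_sum_planeGenerator {A : Matrix ι ι ℝ} (hA : Aᵀ = -A) :
    A = (2⁻¹ : ℝ) • ∑ i, ∑ j, A i j • planeGenerator i j := by
  have hsum : ∑ i, ∑ j, A i j • planeGenerator i j = A - Aᵀ := by
    conv_rhs => rw [matrix_eq_sum_single A]
    simp only [planeGenerator, smul_sub, smul_single, smul_eq_mul, mul_one,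
      Finset.sum_sub_distrib, transpose_sum, transpose_single]
  rw [hsum, hA, sub_neg_eq_add, ← two_smul ℝ A, smul_smul]
  norm_num

/-- The vector field on matrix polynomials generated by the infinitesimal rotation
`planeGenerator i j`. -/
noncomputable def rotationDerivation (i j : ι) :
    Derivation ℝ (MvPolynomial (ι × ι) ℝ) (MvPolynomial (ι × ι) ℝ) :=
  matrixDerivation (planeGenerator i j)

lemma rotationDerivation_swap (i j : ι) : rotationDerivation j i = -rotationDerivation i j := by
  rw [rotationDerivation, planeGenerator_swap, map_neg, rotationDerivation]

lemma rotationDerivation_swap_apply (i j : ι) (p : MvPolynomial (ι × ι) ℝ) :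
    rotationDerivation j i p = -rotationDerivation i j p := by
  rw [rotationDerivation_swap, Derivation.neg_apply]

lemma lie_rotationDerivation_apply (i j k l : ι) (p : MvPolynomial (ι × ι) ℝ) :
    rotationDerivation i j (rotationDerivation k l p) -
        rotationDerivation k l (rotationDerivation i j p) =
      (if i = l then rotationDerivation k j p else 0) +
        (if j = k then rotationDerivation l i p else 0) +
        (if i = k then rotationDerivation j l p else 0) +
        (if j = l then rotationDerivation i k p else 0) := by
  have apply_ite_zero (P : Prop) [Decidable P] (A : Matrix ι ι ℝ) :
      matrixDerivation (if P then A else 0) p = if P then matrixDerivation A p else 0 := by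
    split_ifs <;> simp
  simpa only [Derivation.commutator_apply, planeGenerator_commutator, map_add,
    Derivation.add_apply, apply_ite_zero, rotationDerivation] using
      congrArg (· p) (lie_matrixDerivation (planeGenerator i j) (planeGenerator k l))

/-- The Casimir operator of the rotation group, acting on matrix polynomials. The sum runs over
ordered pairs, so this is twice the sum of squares over the standard basis of the Lie algebra. -/
noncomputable def casimir : MvPolynomial (ι × ι) ℝ →ₗ[ℝ] MvPolynomial (ι × ι) ℝ :=
  ∑ i, ∑ j, (rotationDerivation i j).toLinearMap ∘ₗ (rotationDerivation i j).toLinearMap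

lemma casimir_apply (p : MvPolynomial (ι × ι) ℝ) :
    casimir p = ∑ i, ∑ j, rotationDerivation i j (rotationDerivation i j p) := by
  simp [casimir]

lemma casimir_rotationDerivation (k l : ι) (p : MvPolynomial (ι × ι) ℝ) :
    casimir (rotationDerivation k l p) = rotationDerivation k l (casimir p) := by
  have hcomm (i j : ι) : rotationDerivation i j (rotationDerivation i j (rotationDerivation k l p))
      - rotationDerivation k l (rotationDerivation i j (rotationDerivation i j p)) =
      rotationDerivation i j (rotationDerivation i j (rotationDerivation k l p) -
        rotationDerivation k l (rotationDerivation i j p)) +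
      (rotationDerivation i j (rotationDerivation k l (rotationDerivation i j p)) -
        rotationDerivation k l (rotationDerivation i j (rotationDerivation i j p))) := by
    rw [map_sub]; ring
  rw [← sub_eq_zero]
  simp only [casimir_apply, map_sum, ← Finset.sum_sub_distrib]
  simp only [hcomm, lie_rotationDerivation_apply, map_add, Finset.sum_add_distrib,
    apply_ite (rotationDerivation _ _), map_zero]
  simp only [Finset.sum_ite_eq', Finset.mem_univ, if_true, Finset.sum_const_zero,
    Finset.sum_ite_irrel]
  have hk (x : ι) (q) : rotationDerivation x k q = -rotationDerivation k x q :=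
    rotationDerivation_swap_apply k x q
  have hl (x : ι) (q) : rotationDerivation x l q = -rotationDerivation l x q :=
    rotationDerivation_swap_apply l x q
  simp only [hk, hl, map_neg, Finset.sum_neg_distrib]
  abel

lemma sum_sq_structureConstants {g : ι → ι → ℝ} (hg : ∀ i j, g j i = -g i j) :
    ∑ i, ∑ j, ∑ k, ∑ l, ((if i = l then g k j else 0) + (if j = k then g l i else 0) +
        (if i = k then g j l else 0) + (if j = l then g i k else 0)) ^ 2 =
      4 * ((Fintype.card ι : ℝ) - 2) * ∑ i, ∑ j, g i j ^ 2 := by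
  have hdiag (i : ι) : g i i = 0 := by linarith [hg i i]
  have expand (a b c d : ℝ) : (a + b + c + d) ^ 2 = a * a + b * b + c * c + d * d +
    2 * (a * b) + 2 * (a * c) + 2 * (a * d) + 2 * (b * c) + 2 * (b * d) + 2 * (c * d) := by ring
  simp only [expand, Finset.sum_add_distrib, ite_mul, mul_ite, zero_mul, mul_zero]
  simp only [Finset.sum_ite_eq, Finset.sum_ite_eq', Finset.mem_univ, if_true, Finset.sum_const_zero,
    Finset.sum_ite_irrel]
  have hsymm : ∑ i, ∑ j, g j i ^ 2 = ∑ i, ∑ j, g i j ^ 2 := Finset.sum_comm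
  have hanti (i j : ι) : g j i * g i j = -g i j ^ 2 := by rw [hg i j]; ring
  simp only [← pow_two, hsymm, hanti, hdiag, Finset.sum_const, Finset.card_univ,
    nsmul_eq_mul, mul_neg, Finset.sum_neg_distrib, ← Finset.mul_sum]
  ring

end Algebra

section Bochner
variable {ι : Type*}

/-- Evaluation of a matrix polynomial at the matrix `M`. -/
noncomputable def evalMatrix (M : Matrix ι ι ℝ) : MvPolynomial (ι × ι) ℝ →ₐ[ℝ] ℝ :=
  MvPolynomial.aeval fun x => M x.1 x.2

lemma evalMatrix_X (M : Matrix ι ι ℝ) (x : ι × ι) :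
    evalMatrix M (MvPolynomial.X x) = M x.1 x.2 :=
  MvPolynomial.aeval_X ..

lemma continuous_evalMatrix (p : MvPolynomial (ι × ι) ℝ) : Continuous fun M => evalMatrix M p :=
  (MvPolynomial.continuous_eval p).comp
    (by fun_prop : Continuous fun (M : Matrix ι ι ℝ) (x : ι × ι) => M x.1 x.2)

variable [Fintype ι] [DecidableEq ι]

/-- The carré du champ `Γ(p, q)` associated with `casimir`, as a matrix polynomial; on the rotation
group it is the inner product of the gradients of `p` and `q`, in the normalization of `casimir`. -/
noncomputable def carreDuChamp (p q : MvPolynomial (ι × ι) ℝ) : MvPolynomial (ι × ι) ℝ :=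
  ∑ i, ∑ j, rotationDerivation i j p * rotationDerivation i j q

lemma evalMatrix_carreDuChamp (M : Matrix ι ι ℝ) (p q : MvPolynomial (ι × ι) ℝ) :
    evalMatrix M (carreDuChamp p q) = ∑ x : ι × ι, evalMatrix M (rotationDerivation x.1 x.2 p) *
      evalMatrix M (rotationDerivation x.1 x.2 q) := by
  simp [carreDuChamp, Fintype.sum_prod_type]

lemma evalMatrix_carreDuChamp_self (M : Matrix ι ι ℝ) (p : MvPolynomial (ι × ι) ℝ) :
    evalMatrix M (carreDuChamp p p) =
      ∑ x : ι × ι, evalMatrix M (rotationDerivation x.1 x.2 p) ^ 2 := by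
  simp only [evalMatrix_carreDuChamp, pow_two]

lemma evalMatrix_carreDuChamp_self_nonneg (M : Matrix ι ι ℝ) (p : MvPolynomial (ι × ι) ℝ) :
    0 ≤ evalMatrix M (carreDuChamp p p) := by
  rw [evalMatrix_carreDuChamp_self]; positivity

lemma casimir_mul (p q : MvPolynomial (ι × ι) ℝ) :
    casimir (p * q) = casimir p * q + 2 * carreDuChamp p q + p * casimir q := by
  simp only [casimir_apply, carreDuChamp, Derivation.leibniz, map_add, smul_eq_mul,
    Finset.sum_mul, Finset.mul_sum, ← Finset.sum_add_distrib]
  refine Finset.sum_congr rfl fun i _ => Finset.sum_congr rfl fun j _ => ?_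
  ring

lemma casimir_carreDuChamp_self (p : MvPolynomial (ι × ι) ℝ) :
    casimir (carreDuChamp p p) = 2 * carreDuChamp p (casimir p) +
      2 * ∑ k, ∑ l, carreDuChamp (rotationDerivation k l p) (rotationDerivation k l p) := by
  rw [carreDuChamp, carreDuChamp]
  simp only [map_sum, casimir_mul, casimir_rotationDerivation, Finset.mul_sum,
    ← Finset.sum_add_distrib]
  refine Finset.sum_congr rfl fun i _ => Finset.sum_congr rfl fun j _ => ?_
  ring

lemma sum_sq_sub_swap_le {α : Type*} [Fintype α] (h : α → α → ℝ) :
    ∑ a, ∑ b, (h a b - h b a) ^ 2 ≤ 4 * ∑ a, ∑ b, h a b ^ 2 := by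
  calc ∑ a, ∑ b, (h a b - h b a) ^ 2
      ≤ ∑ a, ∑ b, (2 * h a b ^ 2 + 2 * h b a ^ 2) := by
        gcongr with a _ b _
        linarith [sq_nonneg (h a b + h b a), sub_sq (h a b) (h b a), add_sq (h a b) (h b a)]
    _ = 4 * ∑ a, ∑ b, h a b ^ 2 := by
        simp only [Finset.sum_add_distrib, ← Finset.mul_sum]
        rw [Finset.sum_comm (f := fun a b => h b a ^ 2)]
        ring

-- The antisymmetric part of the Hessian is a Lie bracket, hence determined by the gradient; its
-- size is the curvature of the rotation group.
lemma carreDuChamp_le_hessian (M : Matrix ι ι ℝ) (p : MvPolynomial (ι × ι) ℝ) :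
    ((Fintype.card ι : ℝ) - 2) * evalMatrix M (carreDuChamp p p) ≤
      ∑ k, ∑ l, evalMatrix M
        (carreDuChamp (rotationDerivation k l p) (rotationDerivation k l p)) := by
  let hessian (x y : ι × ι) : ℝ :=
    evalMatrix M (rotationDerivation x.1 x.2 (rotationDerivation y.1 y.2 p))
  have hlie (x y : ι × ι) :=
    congrArg (evalMatrix M) (lie_rotationDerivation_apply x.1 x.2 y.1 y.2 p)
  simp only [map_sub, map_add, apply_ite (evalMatrix M), map_zero] at hlie
  have hcurvature := sum_sq_structureConstants
    (g := fun i j => evalMatrix M (rotationDerivation i j p))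
    fun i j => by rw [rotationDerivation_swap_apply, map_neg]
  have hswap := sum_sq_sub_swap_le hessian
  have hsum : ∑ k, ∑ l, evalMatrix M
      (carreDuChamp (rotationDerivation k l p) (rotationDerivation k l p)) =
      ∑ y, ∑ x, hessian x y ^ 2 := by
    simp only [evalMatrix_carreDuChamp_self]
    rw [Fintype.sum_prod_type]
  simp only [hessian, hlie, Fintype.sum_prod_type] at hswap
  rw [hcurvature] at hswap
  rw [hsum, Finset.sum_comm, evalMatrix_carreDuChamp_self, Fintype.sum_prod_type]
  simp only [Fintype.sum_prod_type]
  linarith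

lemma bochner_inequality (M : Matrix ι ι ℝ) (p : MvPolynomial (ι × ι) ℝ) :
    2 * evalMatrix M (carreDuChamp p (casimir p)) +
      2 * (((Fintype.card ι : ℝ) - 2) * evalMatrix M (carreDuChamp p p)) ≤
        evalMatrix M (casimir (carreDuChamp p p)) := by
  rw [casimir_carreDuChamp_self]
  simp only [map_add, map_mul, map_ofNat, map_sum]
  linarith [carreDuChamp_le_hessian M p]

lemma sq_carreDuChamp_le (M : Matrix ι ι ℝ) (p q : MvPolynomial (ι × ι) ℝ) :
    evalMatrix M (carreDuChamp p q) ^ 2 ≤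
      evalMatrix M (carreDuChamp p p) * evalMatrix M (carreDuChamp q q) := by
  rw [evalMatrix_carreDuChamp, evalMatrix_carreDuChamp_self, evalMatrix_carreDuChamp_self]
  exact Finset.sum_mul_sq_le_sq_mul_sq _ _ _

end Bochner

section Flow
open scoped Matrix.Norms.Frobenius
variable {ι : Type*} [Fintype ι] [DecidableEq ι]

lemma exp_mem_specialOrthogonalGroup {A : Matrix ι ι ℝ} (hA : Aᵀ = -A) :
    NormedSpace.exp A ∈ specialOrthogonalGroup ι ℝ := by
  have horth {B : Matrix ι ι ℝ} (hB : Bᵀ = -B) :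
      NormedSpace.exp B ∈ orthogonalGroup ι ℝ := by
    rw [mem_orthogonalGroup_iff', ← Matrix.exp_transpose, hB,
      ← Matrix.exp_add_of_commute _ _ (Commute.refl B).neg_left, neg_add_cancel,
      NormedSpace.exp_zero]
  refine mem_specialOrthogonalGroup_iff.2 ⟨horth hA, ?_⟩
  set B := (2⁻¹ : ℝ) • A
  have hB : Bᵀ = -B := by rw [transpose_smul, hA, smul_neg]
  have hAB : A = B + B := by rw [← two_smul ℝ B, smul_smul]; norm_num
  have hdet : (NormedSpace.exp B).det * (NormedSpace.exp B).det = 1 := by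
    simpa using congrArg det ((mem_orthogonalGroup_iff' ι ℝ).1 (horth hB))
  rw [hAB, Matrix.exp_add_of_commute _ _ (Commute.refl B), det_mul, hdet]

lemma hasDerivAt_evalMatrix_exp (A M : Matrix ι ι ℝ) (p : MvPolynomial (ι × ι) ℝ) (t : ℝ) :
    HasDerivAt (fun s : ℝ => evalMatrix (NormedSpace.exp (s • A) * M) p)
      (evalMatrix (NormedSpace.exp (t • A) * M) (matrixDerivation A p)) t := by
  induction p using MvPolynomial.induction_on with
  | C c => simpa [evalMatrix] using hasDerivAt_const t c
  | add p q hp hq => simpa only [map_add] using hp.fun_add hq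
  | mul_X p x hp =>
    have hX : HasDerivAt (fun s : ℝ => evalMatrix (NormedSpace.exp (s • A) * M)
        (MvPolynomial.X x)) (evalMatrix (NormedSpace.exp (t • A) * M)
          (matrixDerivation A (MvPolynomial.X x))) t := by
      have hexp := (hasDerivAt_exp_smul_const' A t).mul_const M
      have hentry := (hasDerivAt_pi.1 ((hasDerivAt_pi.1 hexp) x.1)) x.2
      simp only [matrixDerivation_X, map_sum, map_smul, evalMatrix_X]
      refine hentry.congr_deriv ?_
      rw [Matrix.mul_assoc, Matrix.mul_apply]
      rfl
    simp only [map_mul, Derivation.leibniz, map_add, smul_eq_mul]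
    exact (hp.fun_mul hX).congr_deriv (by ring)

end Flow

section MaximumPrinciple
variable {ι : Type*}

lemma secondDeriv_nonpos_of_isLocalMax {f f' : ℝ → ℝ} {c x : ℝ}
    (hf : ∀ t, HasDerivAt f (f' t) t) (hf' : HasDerivAt f' c x) (hmax : IsLocalMax f x) :
    c ≤ 0 := by
  by_contra! hc
  have hderiv : deriv f = f' := funext fun t => (hf t).deriv
  have hmin : IsLocalMin f x := isLocalMin_of_deriv_deriv_pos
    (by rwa [hderiv, hf'.deriv]) hmax.deriv_eq_zero (hf x).continuousAt
  have hconst : f =ᶠ[nhds x] fun _ => f x := by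
    filter_upwards [hmax, hmin] with t h₁ h₂ using le_antisymm h₁ h₂
  have hzero : deriv (deriv f) x = 0 := by
    rw [hconst.deriv.deriv_eq]; simp
  rw [hderiv, hf'.deriv] at hzero
  exact hc.ne' hzero

variable [Fintype ι] [DecidableEq ι]

section Curve
variable {A M : Matrix ι ι ℝ} {p : MvPolynomial (ι × ι) ℝ}

lemma isLocalMax_evalMatrix_exp
    (hmax : ∀ t : ℝ, evalMatrix (NormedSpace.exp (t • A) * M) p ≤ evalMatrix M p) :
    IsLocalMax (fun t : ℝ => evalMatrix (NormedSpace.exp (t • A) * M) p) 0 :=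
  .of_forall fun t => by simpa using hmax t

lemma evalMatrix_matrixDerivation_sq_nonpos_of_max
    (hmax : ∀ t : ℝ, evalMatrix (NormedSpace.exp (t • A) * M) p ≤ evalMatrix M p) :
    evalMatrix M (matrixDerivation A (matrixDerivation A p)) ≤ 0 := by
  simpa using secondDeriv_nonpos_of_isLocalMax (hasDerivAt_evalMatrix_exp A M p)
    (hasDerivAt_evalMatrix_exp A M _ 0) (isLocalMax_evalMatrix_exp hmax)

end Curve

lemma isCompact_specialOrthogonalGroup :
    IsCompact (specialOrthogonalGroup ι ℝ : Set (Matrix ι ι ℝ)) := by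
  have hbox : IsCompact (Set.univ.pi fun _ : ι => Set.univ.pi fun _ : ι =>
      Set.Icc (-1 : ℝ) 1) :=
    isCompact_univ_pi fun _ => isCompact_univ_pi fun _ => isCompact_Icc
  refine hbox.of_isClosed_subset ?_ fun M hM i _ j _ =>
    abs_le.1 (entry_norm_bound_of_unitary (mem_specialOrthogonalGroup_iff.1 hM).1 i j)
  have hset : (specialOrthogonalGroup ι ℝ : Set (Matrix ι ι ℝ)) =
      {M | Mᵀ * M = 1} ∩ {M | M.det = 1} := by
    ext M
    simp [mem_specialOrthogonalGroup_iff, mem_orthogonalGroup_iff']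
  rw [hset]
  exact (isClosed_eq (by fun_prop) continuous_const).inter
    (isClosed_eq (by fun_prop) continuous_const)

lemma exp_smul_mul_mem_specialOrthogonalGroup {A M : Matrix ι ι ℝ} (hA : Aᵀ = -A)
    (hM : M ∈ specialOrthogonalGroup ι ℝ) (t : ℝ) :
    NormedSpace.exp (t • A) * M ∈ specialOrthogonalGroup ι ℝ :=
  mul_mem (exp_mem_specialOrthogonalGroup (by rw [transpose_smul, hA, smul_neg])) hM

lemma evalMatrix_casimir_nonpos_of_isMaxOn {M : Matrix ι ι ℝ} {p : MvPolynomial (ι × ι) ℝ}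
    (hM : M ∈ specialOrthogonalGroup ι ℝ)
    (hmax : IsMaxOn (fun N => evalMatrix N p) (specialOrthogonalGroup ι ℝ) M) :
    evalMatrix M (casimir p) ≤ 0 := by
  simp only [casimir_apply, map_sum]
  refine Finset.sum_nonpos fun i _ => Finset.sum_nonpos fun j _ =>
    evalMatrix_matrixDerivation_sq_nonpos_of_max fun t => hmax ?_
  exact exp_smul_mul_mem_specialOrthogonalGroup (transpose_planeGenerator i j) hM t

lemma evalMatrix_matrixDerivation_eq_zero_of_rotationDerivation {M A : Matrix ι ι ℝ}
    {p : MvPolynomial (ι × ι) ℝ} (hA : Aᵀ = -A)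
    (hp : ∀ i j, evalMatrix M (rotationDerivation i j p) = 0) :
    evalMatrix M (matrixDerivation A p) = 0 := by
  let annihilator : Submodule ℝ (Matrix ι ι ℝ) :=
    { carrier := {B | evalMatrix M (matrixDerivation B p) = 0}
      add_mem' := fun {B C} hB hC => by simp_all
      zero_mem' := by simp
      smul_mem' := fun c B hB => by simp_all }
  have hmem : A ∈ annihilator := by
    rw [eq_half_sum_planeGenerator hA]
    exact annihilator.smul_mem _ <| annihilator.sum_mem fun i _ => annihilator.sum_mem fun j _ =>
      annihilator.smul_mem _ (hp i j)
  exact hmem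

end MaximumPrinciple

section Connectedness
variable {ι : Type*} [Fintype ι] [DecidableEq ι]

open scoped Matrix.Norms.Frobenius in
lemma hasDerivAt_trace_exp_mul (A B : Matrix ι ι ℝ) (t : ℝ) :
    HasDerivAt (fun s : ℝ => (NormedSpace.exp (s • A) * B).trace)
      (NormedSpace.exp (t • A) * (A * B)).trace t := by
  have hexp := (hasDerivAt_exp_smul_const A t).mul_const B
  rw [← Matrix.mul_assoc]
  exact (LinearMap.toContinuousLinearMap (traceLinearMap ι ℝ ℝ)).hasFDerivAt.comp_hasDerivAt t hexp

lemma planeGenerator_mul_self {i j : ι} (hij : i ≠ j) :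
    planeGenerator i j * planeGenerator i j = -(single i i 1 + single j j 1) := by
  simp only [planeGenerator, sub_mul, mul_sub, ne_eq, hij, hij.symm, not_false_eq_true,
    single_mul_single_of_ne, single_mul_single_same, mul_one]
  abel

lemma eigenvalues_add_nonneg {B : Matrix ι ι ℝ} (hB : B.IsHermitian)
    (htrace : ∀ A : Matrix ι ι ℝ, Aᵀ = -A → (A * (A * B)).trace ≤ 0) {i j : ι} (hij : i ≠ j) :
    0 ≤ hB.eigenvalues i + hB.eigenvalues j := by
  let U : Matrix ι ι ℝ := hB.eigenvectorUnitary.1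
  let D := diagonal hB.eigenvalues
  have hU : Uᵀ * U = 1 := (mem_orthogonalGroup_iff' ι ℝ).1 hB.eigenvectorUnitary.2
  have hBU : B = U * D * Uᵀ := hB.spectral_theorem
  have hskew : (U * planeGenerator i j * Uᵀ)ᵀ = -(U * planeGenerator i j * Uᵀ) := by
    simp [transpose_planeGenerator, Matrix.mul_assoc]
  have hconj : U * planeGenerator i j * Uᵀ * (U * planeGenerator i j * Uᵀ * B) =
      U * (planeGenerator i j * planeGenerator i j * D) * Uᵀ := by
    rw [hBU]
    simp only [Matrix.mul_assoc]
    simp only [← Matrix.mul_assoc Uᵀ U, hU, Matrix.one_mul]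
  have htr := htrace _ hskew
  rw [hconj, trace_mul_cycle, hU, Matrix.one_mul, planeGenerator_mul_self hij] at htr
  have hle : -hB.eigenvalues j ≤ hB.eigenvalues i := by
    simpa [add_mul, trace_single_mul, D] using htr
  linarith

lemma eq_one_of_trace_critical {B : Matrix ι ι ℝ} (hB : B ∈ specialOrthogonalGroup ι ℝ)
    (hfirst : ∀ A : Matrix ι ι ℝ, Aᵀ = -A → (A * B).trace = 0)
    (hsecond : ∀ A : Matrix ι ι ℝ, Aᵀ = -A → (A * (A * B)).trace ≤ 0) : B = 1 := by
  obtain ⟨horth, hdet⟩ := mem_specialOrthogonalGroup_iff.1 hB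
  have hsymm : B.IsHermitian := by
    ext i j
    have h := hfirst _ (transpose_planeGenerator i j)
    simp only [planeGenerator, sub_mul, trace_sub, trace_single_mul, sub_eq_zero] at h
    simpa using h
  have hinv : B * B = 1 := by
    have hT : Bᵀ = B := by simpa using hsymm.eq
    simpa [hT] using (mem_orthogonalGroup_iff' ι ℝ).1 horth
  have hsq (i : ι) : hsymm.eigenvalues i = 1 ∨ hsymm.eigenvalues i = -1 := by
    have hvec := hsymm.mulVec_eigenvectorBasis i
    have htwice : hsymm.eigenvectorBasis i = (hsymm.eigenvalues i * hsymm.eigenvalues i) •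
        (⇑(hsymm.eigenvectorBasis i) : ι → ℝ) := by
      rw [mul_smul, ← hvec, ← mulVec_smul, ← hvec, mulVec_mulVec, hinv, one_mulVec]
    have hne : (⇑(hsymm.eigenvectorBasis i) : ι → ℝ) ≠ 0 := fun h =>
      hsymm.eigenvectorBasis.orthonormal.ne_zero i (by ext k; exact congrFun h k)
    exact mul_self_eq_one_iff.1 (smul_left_injective ℝ hne (by simpa using htwice.symm))
  have hpos (i : ι) : hsymm.eigenvalues i = 1 := by
    refine (hsq i).resolve_right fun hi => ?_
    have hother (j : ι) (hj : j ≠ i) : hsymm.eigenvalues j = 1 :=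
      (hsq j).resolve_right fun h => by linarith [eigenvalues_add_nonneg hsymm hsecond hj]
    have hprod : (1 : ℝ) = -1 := by
      simpa [hdet, Finset.prod_eq_single i (fun j _ hj => hother j hj), hi] using
        hsymm.det_eq_prod_eigenvalues
    linarith
  have hdiag := hsymm.spectral_theorem
  rw [show (RCLike.ofReal ∘ hsymm.eigenvalues : ι → ℝ) = 1 from funext hpos] at hdiag
  simpa using hdiag

-- Instead of connecting `M` to `1` by a path, maximize the trace over a level set of `p`: the level
-- set is invariant under all rotation flows, and the only possible maximizer is `1`.
lemma evalMatrix_eq_evalMatrix_one_of_rotationDerivation_eq_zero {M : Matrix ι ι ℝ}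
    {p : MvPolynomial (ι × ι) ℝ} (hM : M ∈ specialOrthogonalGroup ι ℝ)
    (hp : ∀ N ∈ specialOrthogonalGroup ι ℝ, ∀ i j, evalMatrix N (rotationDerivation i j p) = 0) :
    evalMatrix M p = evalMatrix 1 p := by
  let level := (specialOrthogonalGroup ι ℝ : Set (Matrix ι ι ℝ)) ∩
    {N | evalMatrix N p = evalMatrix M p}
  have hcompact : IsCompact level := isCompact_specialOrthogonalGroup.inter_right
    (isClosed_eq (continuous_evalMatrix p) continuous_const)
  have hflow {A N : Matrix ι ι ℝ} (hA : Aᵀ = -A) (hN : N ∈ level) (t : ℝ) :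
      NormedSpace.exp (t • A) * N ∈ level := by
    have hmem := exp_smul_mul_mem_specialOrthogonalGroup hA hN.1
    refine ⟨hmem t, ?_⟩
    have hconst := is_const_of_deriv_eq_zero
      (fun s => (hasDerivAt_evalMatrix_exp A N p s).differentiableAt)
      (fun s => (hasDerivAt_evalMatrix_exp A N p s).deriv.trans
        (evalMatrix_matrixDerivation_eq_zero_of_rotationDerivation hA (hp _ (hmem s)))) t 0
    simpa using hconst.trans (by simpa using hN.2)
  obtain ⟨B, hB, hmax⟩ := hcompact.exists_isMaxOn ⟨M, hM, rfl⟩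
    (by fun_prop : Continuous (trace : Matrix ι ι ℝ → ℝ)).continuousOn
  have hlocal (A : Matrix ι ι ℝ) (hA : Aᵀ = -A) :
      IsLocalMax (fun t : ℝ => (NormedSpace.exp (t • A) * B).trace) 0 :=
    .of_forall fun t => by simpa using hmax (hflow hA hB t)
  have hone : B = 1 := eq_one_of_trace_critical hB.1
    (fun A hA => by simpa using (hlocal A hA).hasDerivAt_eq_zero (hasDerivAt_trace_exp_mul A B 0))
    fun A hA => by
      simpa using secondDeriv_nonpos_of_isLocalMax (hasDerivAt_trace_exp_mul A B)
        (hasDerivAt_trace_exp_mul A (A * B) 0) (hlocal A hA)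
  exact hone ▸ hB.2.symm

end Connectedness

section FlowDeriv
variable {ι : Type*} [Fintype ι] [DecidableEq ι] {A : Matrix ι ι ℝ} {g g' h h' : Matrix ι ι ℝ → ℝ}

/-- `g'` is the derivative of `g` along the flow `M ↦ exp (t • A) * M`. The derivative is required
at all times, but only time `0` carries information since the flow is a one-parameter group. -/
def HasFlowDeriv (A : Matrix ι ι ℝ) (g g' : Matrix ι ι ℝ → ℝ) : Prop :=
  ∀ (M : Matrix ι ι ℝ) (t : ℝ),
    HasDerivAt (fun s : ℝ => g (NormedSpace.exp (s • A) * M)) (g' (NormedSpace.exp (t • A) * M)) t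

lemma hasFlowDeriv_evalMatrix (A : Matrix ι ι ℝ) (p : MvPolynomial (ι × ι) ℝ) :
    HasFlowDeriv A (fun M => evalMatrix M p) (fun M => evalMatrix M (matrixDerivation A p)) :=
  fun M t => hasDerivAt_evalMatrix_exp A M p t

namespace HasFlowDeriv

lemma mul (hg : HasFlowDeriv A g g') (hh : HasFlowDeriv A h h') :
    HasFlowDeriv A (fun M => g M * h M) (fun M => g' M * h M + g M * h' M) :=
  fun M t => (hg M t).fun_mul (hh M t)

lemma sub_const (hg : HasFlowDeriv A g g') (c : ℝ) : HasFlowDeriv A (fun M => g M - c) g' :=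
  fun M t => (hg M t).sub_const c

lemma exp_const_mul (c : ℝ) (hg : HasFlowDeriv A g g') :
    HasFlowDeriv A (fun M => Real.exp (c * g M)) (fun M => c * g' M * Real.exp (c * g M)) :=
  fun M t => (((hg M t).const_mul c).exp).congr_deriv (mul_comm _ _)

end HasFlowDeriv

end FlowDeriv

instance {m n : Type*} [Countable m] [Countable n] : BorelSpace (Matrix m n ℝ) :=
  inferInstanceAs (BorelSpace (m → n → ℝ))

namespace IsHaarSO
variable {n : ℕ} {μ : Measure (Matrix (Fin n) (Fin n) ℝ)}

lemma ae_mem (hμ : IsHaarSO n μ) : ∀ᵐ M ∂μ, M ∈ specialOrthogonalGroup (Fin n) ℝ := by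
  filter_upwards [hμ.2.1] with M hM
  exact mem_specialOrthogonalGroup_iff.2 ⟨(mem_orthogonalGroup_iff' _ _).2 hM.1, hM.2⟩

lemma map_mul_left (hμ : IsHaarSO n μ) {Q : Matrix (Fin n) (Fin n) ℝ}
    (hQ : Q ∈ specialOrthogonalGroup (Fin n) ℝ) : μ.map (fun M => Q * M) = μ :=
  have ⟨horth, hdet⟩ := mem_specialOrthogonalGroup_iff.1 hQ
  hμ.2.2 Q ((mem_orthogonalGroup_iff' _ _).1 horth) hdet

lemma exists_bound (hμ : IsHaarSO n μ) {g : Matrix (Fin n) (Fin n) ℝ → ℝ} (hg : Continuous g) :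
    ∃ B, ∀ᵐ M ∂μ, ‖g M‖ ≤ B := by
  obtain ⟨B, hB⟩ := isCompact_specialOrthogonalGroup.exists_bound_of_continuousOn hg.continuousOn
  exact ⟨B, hμ.ae_mem.mono hB⟩

lemma integrable (hμ : IsHaarSO n μ) {g : Matrix (Fin n) (Fin n) ℝ → ℝ} (hg : Continuous g) :
    Integrable g μ := by
  have : IsProbabilityMeasure μ := hμ.1
  obtain ⟨B, hB⟩ := hμ.exists_bound hg
  exact .of_bound hg.aestronglyMeasurable B hB

lemma integral_mul_left (hμ : IsHaarSO n μ) {g : Matrix (Fin n) (Fin n) ℝ → ℝ}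
    (hg : Continuous g) {Q : Matrix (Fin n) (Fin n) ℝ}
    (hQ : Q ∈ specialOrthogonalGroup (Fin n) ℝ) : ∫ M, g (Q * M) ∂μ = ∫ M, g M ∂μ := by
  conv_rhs => rw [← hμ.map_mul_left hQ]
  exact (integral_map (by fun_prop) hg.aestronglyMeasurable).symm

lemma integral_flowDeriv_eq_zero (hμ : IsHaarSO n μ) {A : Matrix (Fin n) (Fin n) ℝ}
    (hA : Aᵀ = -A) {g g' : Matrix (Fin n) (Fin n) ℝ → ℝ} (hg : Continuous g)
    (hg' : Continuous g') (hflow : HasFlowDeriv A g g') : ∫ M, g' M ∂μ = 0 := by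
  have : IsProbabilityMeasure μ := hμ.1
  obtain ⟨B, hB⟩ := isCompact_specialOrthogonalGroup.exists_bound_of_continuousOn hg'.continuousOn
  have hderiv := (hasDerivAt_integral_of_dominated_loc_of_deriv_le (μ := μ) (𝕜 := ℝ)
    (F := fun t M => g (NormedSpace.exp (t • A) * M))
    (F' := fun t M => g' (NormedSpace.exp (t • A) * M)) (bound := fun _ => B) (x₀ := 0)
    Filter.univ_mem (.of_forall fun t => Continuous.aestronglyMeasurable (by fun_prop))
    (by simpa using hμ.integrable hg) (Continuous.aestronglyMeasurable (by fun_prop))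
    (hμ.ae_mem.mono fun M hM t _ => hB _ (exp_smul_mul_mem_specialOrthogonalGroup hA hM t))
    (integrable_const B) (.of_forall fun M t _ => hflow M t)).2
  have hconst : (fun t : ℝ => ∫ M, g (NormedSpace.exp (t • A) * M) ∂μ) = fun _ => ∫ M, g M ∂μ :=
    funext fun t => hμ.integral_mul_left hg
      (exp_mem_specialOrthogonalGroup (by rw [transpose_smul, hA, smul_neg]))
  rw [hconst] at hderiv
  simpa using hderiv.unique (hasDerivAt_const _ _)

lemma integral_casimir_mul (hμ : IsHaarSO n μ) (u : MvPolynomial (Fin n × Fin n) ℝ)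
    {h : Matrix (Fin n) (Fin n) ℝ → ℝ} {h' : Fin n → Fin n → Matrix (Fin n) (Fin n) ℝ → ℝ}
    (hh : Continuous h) (hh' : ∀ i j, Continuous (h' i j))
    (hflow : ∀ i j, HasFlowDeriv (planeGenerator i j) h (h' i j)) :
    ∫ M, evalMatrix M (casimir u) * h M ∂μ =
      -∫ M, ∑ i, ∑ j, evalMatrix M (rotationDerivation i j u) * h' i j M ∂μ := by
  have hcont := continuous_evalMatrix (ι := Fin n)
  rw [← integral_neg, ← sub_eq_zero, ← integral_sub (hμ.integrable (by fun_prop))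
    (hμ.integrable (by fun_prop))]
  have hsum (M : Matrix (Fin n) (Fin n) ℝ) : evalMatrix M (casimir u) * h M -
      -∑ i, ∑ j, evalMatrix M (rotationDerivation i j u) * h' i j M = ∑ i, ∑ j,
        (evalMatrix M (rotationDerivation i j (rotationDerivation i j u)) * h M +
          evalMatrix M (rotationDerivation i j u) * h' i j M) := by
    simp only [casimir_apply, map_sum, Finset.sum_add_distrib, Finset.sum_mul, sub_neg_eq_add]
  simp only [hsum]
  rw [integral_finsetSum _ fun i _ => hμ.integrable (by fun_prop)]
  refine Finset.sum_eq_zero fun i _ => ?_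
  rw [integral_finsetSum _ fun j _ => hμ.integrable (by fun_prop)]
  exact Finset.sum_eq_zero fun j _ => hμ.integral_flowDeriv_eq_zero
    (transpose_planeGenerator i j) (by fun_prop) (by fun_prop)
    ((hasFlowDeriv_evalMatrix _ _).mul (hflow i j))

lemma eq_zero_of_ae_eq_zero (hμ : IsHaarSO n μ) {g : Matrix (Fin n) (Fin n) ℝ → ℝ}
    (hg : Continuous g) (hzero : ∀ᵐ M ∂μ, g M = 0) {M : Matrix (Fin n) (Fin n) ℝ}
    (hM : M ∈ specialOrthogonalGroup (Fin n) ℝ) : g M = 0 := by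
  have : IsProbabilityMeasure μ := hμ.1
  by_contra hne
  have hnull (N : Matrix (Fin n) (Fin n) ℝ) (hN : N ∈ specialOrthogonalGroup (Fin n) ℝ) :
      ∃ U ∈ nhdsWithin N (specialOrthogonalGroup (Fin n) ℝ), μ U = 0 := by
    obtain ⟨horth, hdet⟩ := mem_specialOrthogonalGroup_iff.1 hN
    have hQ : M * Nᵀ ∈ specialOrthogonalGroup (Fin n) ℝ :=
      mul_mem hM (mem_specialOrthogonalGroup_iff.2
        ⟨Unitary.star_mem horth, by rw [det_transpose, hdet]⟩)
    refine ⟨(M * Nᵀ * ·) ⁻¹' {K | g K ≠ 0}, mem_nhdsWithin_of_mem_nhds ?_, ?_⟩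
    · refine ((isOpen_ne_fun hg continuous_const).preimage (by fun_prop)).mem_nhds ?_
      simpa [Matrix.mul_assoc, (mem_orthogonalGroup_iff' _ _).1 horth] using hne
    · rw [← Measure.map_apply (by fun_prop) (isOpen_ne_fun hg continuous_const).measurableSet,
        hμ.map_mul_left hQ]
      exact hzero
  have hSO := isCompact_specialOrthogonalGroup.measure_zero_of_nhdsWithin hnull
  obtain ⟨N, hN, hN'⟩ := (hμ.ae_mem.and (measure_eq_zero_iff_ae_notMem.1 hSO)).exists
  exact hN' hN

end IsHaarSO

section Degree

lemma totalDegree_mkDerivation_le {σ R : Type*} [CommRing R] {f : σ → MvPolynomial σ R}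
    (hf : ∀ i, (f i).totalDegree ≤ 1) (p : MvPolynomial σ R) :
    (MvPolynomial.mkDerivation R f p).totalDegree ≤ p.totalDegree := by
  rw [p.as_sum, map_sum, ← p.as_sum]
  refine MvPolynomial.totalDegree_finsetSum_le fun s hs => ?_
  rw [MvPolynomial.mkDerivation_monomial]
  refine (MvPolynomial.totalDegree_smul_le _ _).trans <|
    MvPolynomial.totalDegree_finsetSum_le fun i hi => ?_
  have hsplit : s - Finsupp.single i 1 + Finsupp.single i 1 = s :=
    tsub_add_cancel_of_le (by simpa [Nat.one_le_iff_ne_zero] using hi)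
  calc _ ≤ ((s - Finsupp.single i 1).sum fun _ => id) + 1 :=
        (MvPolynomial.totalDegree_mul _ _).trans
          (add_le_add (MvPolynomial.totalDegree_monomial_le _ _) (hf i))
    _ = s.sum fun _ => id := by
        conv_rhs => rw [← hsplit, Finsupp.sum_add_index' (by simp) (by simp)]
        simp
    _ ≤ p.totalDegree := MvPolynomial.le_totalDegree hs

variable {ι : Type*} [Fintype ι]

lemma totalDegree_matrixDerivation_le (A : Matrix ι ι ℝ) (p : MvPolynomial (ι × ι) ℝ) :
    (matrixDerivation A p).totalDegree ≤ p.totalDegree :=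
  totalDegree_mkDerivation_le (fun _ => MvPolynomial.totalDegree_finsetSum_le fun _ _ =>
    (MvPolynomial.totalDegree_smul_le _ _).trans (MvPolynomial.totalDegree_X _).le) p

lemma totalDegree_casimir_le [DecidableEq ι] (p : MvPolynomial (ι × ι) ℝ) :
    (casimir p).totalDegree ≤ p.totalDegree := by
  rw [casimir_apply]
  exact MvPolynomial.totalDegree_finsetSum_le fun i _ =>
    MvPolynomial.totalDegree_finsetSum_le fun j _ =>
      (totalDegree_matrixDerivation_le _ _).trans (totalDegree_matrixDerivation_le _ _)

end Degree

namespace IsHaarSO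
variable {n : ℕ} {μ : Measure (Matrix (Fin n) (Fin n) ℝ)}

lemma integral_casimir_mul_evalMatrix (hμ : IsHaarSO n μ) (p q : MvPolynomial (Fin n × Fin n) ℝ) :
    ∫ M, evalMatrix M (casimir p) * evalMatrix M q ∂μ =
      -∫ M, evalMatrix M (carreDuChamp p q) ∂μ := by
  rw [hμ.integral_casimir_mul p (continuous_evalMatrix q)
    (fun i j => continuous_evalMatrix (rotationDerivation i j q))
    fun i j => hasFlowDeriv_evalMatrix _ q]
  simp [carreDuChamp]

lemma integral_casimir_eq_zero (hμ : IsHaarSO n μ) (p : MvPolynomial (Fin n × Fin n) ℝ) :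
    ∫ M, evalMatrix M (casimir p) ∂μ = 0 := by
  simpa [carreDuChamp] using hμ.integral_casimir_mul_evalMatrix p 1

lemma evalMatrix_eq_of_integral_mul_casimir_eq_zero (hμ : IsHaarSO n μ)
    {p : MvPolynomial (Fin n × Fin n) ℝ}
    (hp : ∫ M, evalMatrix M p * evalMatrix M (casimir p) ∂μ = 0)
    {M : Matrix (Fin n) (Fin n) ℝ} (hM : M ∈ specialOrthogonalGroup (Fin n) ℝ) :
    evalMatrix M p = evalMatrix 1 p := by
  have hcont := continuous_evalMatrix (carreDuChamp p p)
  have hΓ : ∫ N, evalMatrix N (carreDuChamp p p) ∂μ = 0 := by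
    rw [← neg_eq_zero, ← hμ.integral_casimir_mul_evalMatrix, ← hp]
    simp only [mul_comm]
  refine evalMatrix_eq_evalMatrix_one_of_rotationDerivation_eq_zero hM fun N hN i j => ?_
  have hzero := hμ.eq_zero_of_ae_eq_zero hcont
    ((integral_eq_zero_iff_of_nonneg (fun N => evalMatrix_carreDuChamp_self_nonneg N p)
      (hμ.integrable hcont)).1 hΓ) hN
  rw [evalMatrix_carreDuChamp_self,
    Finset.sum_eq_zero_iff_of_nonneg fun _ _ => sq_nonneg _] at hzero
  exact pow_eq_zero_iff two_ne_zero |>.1 (hzero (i, j) (Finset.mem_univ _))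

lemma memLp_evalMatrix (hμ : IsHaarSO n μ) (p : MvPolynomial (Fin n × Fin n) ℝ) :
    MemLp (fun M => evalMatrix M p) 2 μ := by
  have : IsProbabilityMeasure μ := hμ.1
  obtain ⟨B, hB⟩ := hμ.exists_bound (continuous_evalMatrix p)
  exact .of_bound (continuous_evalMatrix p).aestronglyMeasurable B hB

lemma exists_integral_sub_casimir_mul_casimir_eq_zero (hμ : IsHaarSO n μ)
    (f : MvPolynomial (Fin n × Fin n) ℝ) :
    ∃ u, u.totalDegree ≤ f.totalDegree ∧ ∀ q : MvPolynomial (Fin n × Fin n) ℝ,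
      q.totalDegree ≤ f.totalDegree →
        ∫ M, evalMatrix M (f - casimir u) * evalMatrix M (casimir q) ∂μ = 0 := by
  let toL2 : MvPolynomial (Fin n × Fin n) ℝ →ₗ[ℝ] Lp ℝ 2 μ :=
    { toFun := fun p => (hμ.memLp_evalMatrix p).toLp
      map_add' := fun p q => by
        rw [← MemLp.toLp_add]; congr 1; ext M; exact map_add _ _ _
      map_smul' := fun c p => by
        rw [RingHom.id_apply, ← MemLp.toLp_const_smul]; congr 1; ext M; exact map_smul _ _ _ }
  let V := MvPolynomial.restrictTotalDegree (Fin n × Fin n) ℝ f.totalDegree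
  let W := V.map (toL2 ∘ₗ casimir)
  obtain ⟨u, hu, hproj⟩ := (W.starProjection_apply_mem (toL2 f) : W.starProjection (toL2 f) ∈ W)
  refine ⟨u, (MvPolynomial.mem_restrictTotalDegree _ _ _).1 hu, fun q hq => ?_⟩
  have horth : inner ℝ (toL2 (f - casimir u)) (toL2 (casimir q)) = 0 := by
    rw [map_sub]
    have := W.starProjection_inner_eq_zero (toL2 f) (toL2 (casimir q))
      ⟨q, (MvPolynomial.mem_restrictTotalDegree _ _ _).2 hq, rfl⟩
    rwa [← hproj] at this
  rw [← horth, L2.inner_def]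
  refine integral_congr_ae ?_
  filter_upwards [(hμ.memLp_evalMatrix (f - casimir u)).coeFn_toLp,
    (hμ.memLp_evalMatrix (casimir q)).coeFn_toLp] with M h₁ h₂
  change _ = inner ℝ ((hμ.memLp_evalMatrix (f - casimir u)).toLp _ M)
    ((hμ.memLp_evalMatrix (casimir q)).toLp _ M)
  rw [h₁, h₂]
  simp [mul_comm]

lemma exists_casimir_eq_sub_integral (hμ : IsHaarSO n μ) (f : MvPolynomial (Fin n × Fin n) ℝ) :
    ∃ u, ∀ M ∈ specialOrthogonalGroup (Fin n) ℝ,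
      evalMatrix M (casimir u) = evalMatrix M f - ∫ N, evalMatrix N f ∂μ := by
  have : IsProbabilityMeasure μ := hμ.1
  obtain ⟨u, hdeg, hu⟩ := hμ.exists_integral_sub_casimir_mul_casimir_eq_zero f
  have hconst := fun M hM => hμ.evalMatrix_eq_of_integral_mul_casimir_eq_zero (M := M)
    (hu (f - casimir u) ((MvPolynomial.totalDegree_sub _ _).trans
      (max_le le_rfl ((totalDegree_casimir_le u).trans hdeg)))) hM
  have hmean : ∫ M, evalMatrix M f ∂μ = evalMatrix 1 (f - casimir u) := by
    have hint := integral_congr_ae (hμ.ae_mem.mono hconst)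
    simp only [map_sub (evalMatrix _) f] at hint
    rw [integral_sub (hμ.integrable (continuous_evalMatrix f))
      (hμ.integrable (continuous_evalMatrix _)), hμ.integral_casimir_eq_zero] at hint
    simpa using hint
  refine ⟨u, fun M hM => ?_⟩
  rw [hmean, ← hconst M hM, map_sub]
  ring

end IsHaarSO

section GradientBound
variable {ι : Type*} [Fintype ι] [DecidableEq ι]

lemma evalMatrix_matrixDerivation_eq_of_sub_const {p q : MvPolynomial (ι × ι) ℝ} {c : ℝ}
    (hpq : ∀ M ∈ specialOrthogonalGroup ι ℝ, evalMatrix M p = evalMatrix M q - c)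
    {A M : Matrix ι ι ℝ} (hA : Aᵀ = -A) (hM : M ∈ specialOrthogonalGroup ι ℝ) :
    evalMatrix M (matrixDerivation A p) = evalMatrix M (matrixDerivation A q) := by
  have hp := hasDerivAt_evalMatrix_exp A M p 0
  have hq := (hasDerivAt_evalMatrix_exp A M q 0).sub_const c
  simp only [hpq _ (exp_smul_mul_mem_specialOrthogonalGroup hA hM _)] at hp
  simpa using hp.unique hq

variable {f u : MvPolynomial (ι × ι) ℝ} {c V : ℝ}

lemma evalMatrix_carreDuChamp_casimir
    (hu : ∀ M ∈ specialOrthogonalGroup ι ℝ, evalMatrix M (casimir u) = evalMatrix M f - c)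
    {M : Matrix ι ι ℝ} (hM : M ∈ specialOrthogonalGroup ι ℝ) (p : MvPolynomial (ι × ι) ℝ) :
    evalMatrix M (carreDuChamp p (casimir u)) = evalMatrix M (carreDuChamp p f) := by
  simp only [evalMatrix_carreDuChamp, rotationDerivation,
    evalMatrix_matrixDerivation_eq_of_sub_const hu (transpose_planeGenerator _ _) hM]

lemma carreDuChamp_self_le_of_casimir_eq (hcard : 2 < Fintype.card ι)
    (hu : ∀ M ∈ specialOrthogonalGroup ι ℝ, evalMatrix M (casimir u) = evalMatrix M f - c)
    (hf : ∀ M ∈ specialOrthogonalGroup ι ℝ, evalMatrix M (carreDuChamp f f) ≤ V)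
    {M : Matrix ι ι ℝ} (hM : M ∈ specialOrthogonalGroup ι ℝ) :
    evalMatrix M (carreDuChamp u u) ≤ V / ((Fintype.card ι : ℝ) - 2) ^ 2 := by
  obtain ⟨N, hN, hmax⟩ := isCompact_specialOrthogonalGroup.exists_isMaxOn ⟨M, hM⟩
    (continuous_evalMatrix (carreDuChamp u u)).continuousOn
  refine (hmax hM).trans ?_
  have hκ : 0 < (Fintype.card ι : ℝ) - 2 := by
    rw [sub_pos]; exact_mod_cast hcard
  set G := evalMatrix N (carreDuChamp u u)
  have hG : 0 ≤ G := evalMatrix_carreDuChamp_self_nonneg N u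
  have hV : 0 ≤ V := (evalMatrix_carreDuChamp_self_nonneg N f).trans (hf N hN)
  have hbochner : ((Fintype.card ι : ℝ) - 2) * G ≤ -evalMatrix N (carreDuChamp u f) := by
    have h := (bochner_inequality N u).trans (evalMatrix_casimir_nonpos_of_isMaxOn hN hmax)
    rw [evalMatrix_carreDuChamp_casimir hu hN] at h
    linarith
  have hsq : (((Fintype.card ι : ℝ) - 2) * G) ^ 2 ≤ G * V :=
    calc _ ≤ (-evalMatrix N (carreDuChamp u f)) ^ 2 := by gcongr
      _ ≤ G * evalMatrix N (carreDuChamp f f) := by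
        rw [neg_sq]; exact sq_carreDuChamp_le N u f
      _ ≤ G * V := by gcongr; exact hf N hN
  change G ≤ _
  rcases hG.eq_or_lt with hzero | hpos
  · rw [← hzero]; positivity
  · rw [le_div_iff₀ (by positivity)]
    exact le_of_mul_le_mul_left (by linarith) hpos

lemma neg_carreDuChamp_le_of_casimir_eq (hcard : 2 < Fintype.card ι)
    (hu : ∀ M ∈ specialOrthogonalGroup ι ℝ, evalMatrix M (casimir u) = evalMatrix M f - c)
    (hf : ∀ M ∈ specialOrthogonalGroup ι ℝ, evalMatrix M (carreDuChamp f f) ≤ V)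
    {M : Matrix ι ι ℝ} (hM : M ∈ specialOrthogonalGroup ι ℝ) :
    -evalMatrix M (carreDuChamp u f) ≤ V / ((Fintype.card ι : ℝ) - 2) := by
  have hκ : 0 < (Fintype.card ι : ℝ) - 2 := by
    rw [sub_pos]; exact_mod_cast hcard
  have hV : 0 ≤ V := (evalMatrix_carreDuChamp_self_nonneg M f).trans (hf M hM)
  refine neg_le_of_neg_le <| (abs_le_of_sq_le_sq' ?_ (by positivity)).1
  calc _ ≤ _ := sq_carreDuChamp_le M u f
    _ ≤ V / ((Fintype.card ι : ℝ) - 2) ^ 2 * V := by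
        gcongr
        · exact evalMatrix_carreDuChamp_self_nonneg M f
        · exact carreDuChamp_self_le_of_casimir_eq hcard hu hf hM
        · exact hf M hM
    _ = (V / ((Fintype.card ι : ℝ) - 2)) ^ 2 := by field_simp

end GradientBound

section Herbst
variable {Ω : Type*} [MeasurableSpace Ω] {μ : Measure Ω} {X : Ω → ℝ} {c : ℝ≥0}

lemma hasDerivAt_mgf_comp_mul_const (hX : ∀ t, Integrable (fun ω => Real.exp (t * X ω)) μ)
    (t s : ℝ) :
    HasDerivAt (fun s => mgf X μ (s * t)) (μ[fun ω => X ω * Real.exp (s * t * X ω)] * t) s := by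
  have hmem : s * t ∈ interior (integrableExpSet X μ) := by
    have hset : integrableExpSet X μ = Set.univ := Set.eq_univ_of_forall hX
    rw [hset, interior_univ]
    exact Set.mem_univ _
  exact (hasDerivAt_mgf hmem).comp s (hasDerivAt_mul_const t)

lemma hasSubgaussianMGF_of_mul_integral_le [IsProbabilityMeasure μ]
    (hX : ∀ t, Integrable (fun ω => Real.exp (t * X ω)) μ)
    (hle : ∀ t, t * μ[fun ω => X ω * Real.exp (t * X ω)] ≤ c * t ^ 2 * mgf X μ t) :
    HasSubgaussianMGF X c μ where
  integrable_exp_mul := hX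
  mgf_le t := by
    let F (s : ℝ) : ℝ := mgf X μ (s * t) * Real.exp (-(c * (s * t) ^ 2 / 2))
    have hF (s : ℝ) : HasDerivAt F ((μ[fun ω => X ω * Real.exp (s * t * X ω)] * t -
        c * s * t ^ 2 * mgf X μ (s * t)) * Real.exp (-(c * (s * t) ^ 2 / 2))) s := by
      have hquad : HasDerivAt (fun s : ℝ => -(c * (s * t) ^ 2 / 2)) (-(c * s * t ^ 2)) s := by
        have hsq := (hasDerivAt_mul_const (x := s) t).fun_pow 2
        exact ((hsq.const_mul (c : ℝ)).div_const 2).neg.congr_deriv (by ring)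
      exact ((hasDerivAt_mgf_comp_mul_const hX t s).fun_mul hquad.exp).congr_deriv (by ring)
    have hanti : AntitoneOn F (Set.Icc 0 1) := by
      refine antitoneOn_of_deriv_nonpos (convex_Icc 0 1)
        (fun s _ => (hF s).continuousAt.continuousWithinAt)
        (fun s _ => (hF s).differentiableAt.differentiableWithinAt) fun s hs => ?_
      rw [interior_Icc] at hs
      rw [(hF s).deriv]
      refine mul_nonpos_of_nonpos_of_nonneg (sub_nonpos.2 ?_) (Real.exp_nonneg _)
      refine le_of_mul_le_mul_left ?_ hs.1
      linarith [hle (s * t)]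
    have h01 : F 1 ≤ F 0 := hanti (by simp) (by simp) zero_le_one
    simp only [F, one_mul, zero_mul, mgf_zero] at h01
    rw [Real.exp_neg] at h01
    simpa [← div_eq_mul_inv, div_le_iff₀ (Real.exp_pos _)] using h01

end Herbst

namespace IsHaarSO
variable {n : ℕ} {μ : Measure (Matrix (Fin n) (Fin n) ℝ)}

lemma integral_casimir_mul_exp (hμ : IsHaarSO n μ) (u f : MvPolynomial (Fin n × Fin n) ℝ)
    (c t : ℝ) :
    ∫ M, evalMatrix M (casimir u) * Real.exp (t * (evalMatrix M f - c)) ∂μ =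
      t * ∫ M, -evalMatrix M (carreDuChamp u f) * Real.exp (t * (evalMatrix M f - c)) ∂μ := by
  have hcont := continuous_evalMatrix (ι := Fin n)
  have hflow (i j : Fin n) : HasFlowDeriv (planeGenerator i j)
      (fun M => Real.exp (t * (evalMatrix M f - c)))
      (fun M => t * evalMatrix M (rotationDerivation i j f) *
        Real.exp (t * (evalMatrix M f - c))) :=
    ((hasFlowDeriv_evalMatrix _ f).sub_const c).exp_const_mul t
  rw [hμ.integral_casimir_mul u (by fun_prop) (fun i j => by fun_prop) hflow, ← integral_neg,
    ← integral_const_mul]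
  refine integral_congr_ae (.of_forall fun M => ?_)
  simp only [evalMatrix_carreDuChamp, Fintype.sum_prod_type, Finset.sum_mul, Finset.mul_sum,
    ← Finset.sum_neg_distrib]
  exact Finset.sum_congr rfl fun i _ => Finset.sum_congr rfl fun j _ => by ring

lemma hasSubgaussianMGF_evalMatrix (hμ : IsHaarSO n μ) (hn : 3 ≤ n)
    {f : MvPolynomial (Fin n × Fin n) ℝ} {c : ℝ≥0}
    (hf : ∀ M ∈ specialOrthogonalGroup (Fin n) ℝ,
      evalMatrix M (carreDuChamp f f) ≤ ((n : ℝ) - 2) * c) :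
    HasSubgaussianMGF (fun M => evalMatrix M f - ∫ N, evalMatrix N f ∂μ) c μ := by
  have : IsProbabilityMeasure μ := hμ.1
  have hcont := continuous_evalMatrix (ι := Fin n)
  have hκ : (n : ℝ) - 2 ≠ 0 := sub_ne_zero.2 (by norm_cast; lia)
  obtain ⟨u, hu⟩ := hμ.exists_casimir_eq_sub_integral f
  have hgradient : ∀ M ∈ specialOrthogonalGroup (Fin n) ℝ,
      -evalMatrix M (carreDuChamp u f) ≤ c := fun M hM => by
    simpa [hκ] using neg_carreDuChamp_le_of_casimir_eq (by rwa [Fintype.card_fin]) hu hf hM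
  set mean := ∫ N, evalMatrix N f ∂μ
  refine hasSubgaussianMGF_of_mul_integral_le (fun t => hμ.integrable (by fun_prop)) fun t => ?_
  have hpoisson := integral_congr_ae (hμ.ae_mem.mono fun M hM =>
    congrArg (· * Real.exp (t * (evalMatrix M f - mean))) (hu M hM))
  calc t * ∫ M, (evalMatrix M f - mean) * Real.exp (t * (evalMatrix M f - mean)) ∂μ
      = t ^ 2 * ∫ M, -evalMatrix M (carreDuChamp u f) *
          Real.exp (t * (evalMatrix M f - mean)) ∂μ := by
        rw [← hpoisson, hμ.integral_casimir_mul_exp]; ring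
    _ ≤ t ^ 2 * ∫ M, c * Real.exp (t * (evalMatrix M f - mean)) ∂μ := by
        gcongr ?_ * ?_
        exact integral_mono_ae (hμ.integrable (by fun_prop)) (hμ.integrable (by fun_prop)) <|
          hμ.ae_mem.mono fun M hM => mul_le_mul_of_nonneg_right (hgradient M hM)
            (Real.exp_nonneg _)
    _ = c * t ^ 2 * mgf (fun M => evalMatrix M f - mean) μ t := by
        rw [integral_const_mul, mgf]; ring

end IsHaarSO

section Bernstein
open Polynomial Finset
open scoped unitInterval

/-- The polynomial of degree at most `n` with Bernstein coefficients `a 0, …, a n`. -/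
noncomputable def bernsteinSum (n : ℕ) (a : ℕ → ℝ) : ℝ[X] :=
  ∑ ν ∈ range (n + 1), C (a ν) * bernsteinPolynomial ℝ n ν

lemma abs_eval_bernsteinSum_le {n : ℕ} {a : ℕ → ℝ} {B : ℝ} (ha : ∀ ν ≤ n, |a ν| ≤ B) (x : I) :
    |(bernsteinSum n a).eval (x : ℝ)| ≤ B := by
  have hb (ν : ℕ) : 0 ≤ (bernsteinPolynomial ℝ n ν).eval (x : ℝ) :=
    bernstein_nonneg (n := n) (ν := ν) (x := x)
  have hone : ∑ ν ∈ range (n + 1), (bernsteinPolynomial ℝ n ν).eval (x : ℝ) = 1 := by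
    rw [← eval_finsetSum, bernsteinPolynomial.sum, eval_one]
  calc |(bernsteinSum n a).eval (x : ℝ)|
      ≤ ∑ ν ∈ range (n + 1), |a ν| * (bernsteinPolynomial ℝ n ν).eval (x : ℝ) := by
        rw [bernsteinSum, eval_finsetSum]
        refine (abs_sum_le_sum_abs _ _).trans_eq (sum_congr rfl fun ν _ => ?_)
        rw [eval_mul, eval_C, abs_mul, abs_of_nonneg (hb ν)]
    _ ≤ ∑ ν ∈ range (n + 1), B * (bernsteinPolynomial ℝ n ν).eval (x : ℝ) := by
        gcongr with ν hν
        · exact hb ν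
        · exact ha ν (Nat.lt_succ_iff.1 (mem_range.1 hν))
    _ = B := by rw [← mul_sum, hone, mul_one]

lemma derivative_bernsteinSum (n : ℕ) (a : ℕ → ℝ) :
    derivative (bernsteinSum (n + 1) a) =
      bernsteinSum n fun ν => (n + 1) * (a (ν + 1) - a ν) := by
  have hshift : ∑ ν ∈ range (n + 1), C (a ν) * bernsteinPolynomial ℝ n ν =
      ∑ ν ∈ range (n + 1), C (a (ν + 1)) * bernsteinPolynomial ℝ n (ν + 1) +
        C (a 0) * bernsteinPolynomial ℝ n 0 := by
    rw [← sum_range_succ' fun ν => C (a ν) * bernsteinPolynomial ℝ n ν, sum_range_succ _ (n + 1),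
      bernsteinPolynomial.eq_zero_of_lt ℝ n.lt_succ_self, mul_zero, add_zero]
  calc derivative (bernsteinSum (n + 1) a)
      = ((n : ℝ[X]) + 1) * (∑ ν ∈ range (n + 1), C (a (ν + 1)) * bernsteinPolynomial ℝ n ν -
          (∑ ν ∈ range (n + 1), C (a (ν + 1)) * bernsteinPolynomial ℝ n (ν + 1) +
            C (a 0) * bernsteinPolynomial ℝ n 0)) := by
        rw [bernsteinSum, sum_range_succ']
        simp only [derivative_add, derivative_sum, derivative_C_mul,
          bernsteinPolynomial.derivative_succ, bernsteinPolynomial.derivative_zero,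
          Nat.add_sub_cancel, Nat.cast_add, Nat.cast_one, mul_sub, mul_add, sum_sub_distrib,
          mul_sum, mul_left_comm (C _), neg_mul, mul_neg]
        ring
    _ = _ := by
        rw [← hshift, bernsteinSum, ← sum_sub_distrib, mul_sum]
        refine sum_congr rfl fun ν _ => ?_
        simp only [map_mul, map_sub, map_add, map_natCast, map_one]
        ring

lemma eval_bernsteinSum (n : ℕ) (f : ℝ → ℝ) {g : C(I, ℝ)} (hg : ∀ x : I, g x = f x) (x : I) :
    (bernsteinSum n fun ν => f (ν / n)).eval (x : ℝ) = bernsteinApproximation n g x := by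
  rw [bernsteinApproximation.apply, bernsteinSum, eval_finsetSum, sum_range]
  refine sum_congr rfl fun ν _ => ?_
  rw [eval_mul, eval_C, mul_comm, smul_eq_mul, hg]
  rfl

lemma exists_polynomial_near_of_lipschitzOnWith_Icc_zero_one {f : ℝ → ℝ} {K : ℝ≥0} {B ε : ℝ}
    (hf : LipschitzOnWith K f (Set.Icc 0 1)) (hB : ∀ x ∈ Set.Icc (0 : ℝ) 1, |f x| ≤ B)
    (hε : 0 < ε) :
    ∃ p : ℝ[X], ∀ x ∈ Set.Icc (0 : ℝ) 1,
      |p.eval x - f x| ≤ ε ∧ |p.eval x| ≤ B ∧ |p.derivative.eval x| ≤ K := by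
  let g : C(I, ℝ) := ⟨fun x => f x, hf.continuousOn.domRestrict⟩
  obtain ⟨n, hn⟩ := ((Metric.tendsto_atTop.1
    ((Filter.tendsto_add_atTop_iff_nat 1).2 (bernsteinApproximation_uniform g))) ε hε)
  have hnear := hn n le_rfl
  have hnode (ν : ℕ) (hν : ν ≤ n + 1) : (ν : ℝ) / (n + 1 : ℕ) ∈ Set.Icc (0 : ℝ) 1 :=
    ⟨by positivity, div_le_one_of_le₀ (by exact_mod_cast hν) (by positivity)⟩
  refine ⟨bernsteinSum (n + 1) fun ν => f (ν / (n + 1 : ℕ)), fun x hx => ⟨?_, ?_, ?_⟩⟩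
  · rw [eval_bernsteinSum (n + 1) f (g := g) (fun _ => rfl) ⟨x, hx⟩]
    exact (ContinuousMap.dist_apply_le_dist ⟨x, hx⟩).trans hnear.le
  · exact abs_eval_bernsteinSum_le (fun ν hν => hB _ (hnode ν hν)) ⟨x, hx⟩
  · rw [derivative_bernsteinSum]
    refine abs_eval_bernsteinSum_le (fun ν hν => ?_) ⟨x, hx⟩
    have hstep := hf.dist_le_mul _ (hnode (ν + 1) (by lia)) _ (hnode ν (by lia))
    have hdist : dist (((ν + 1 : ℕ) : ℝ) / (n + 1 : ℕ)) (ν / (n + 1 : ℕ)) = ((n : ℝ) + 1)⁻¹ := by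
      rw [Real.dist_eq, ← sub_div, Nat.cast_succ, Nat.cast_succ, add_sub_cancel_left, one_div,
        abs_of_pos (by positivity)]
    rw [Real.dist_eq, hdist, ← div_eq_mul_inv, le_div_iff₀ (by positivity)] at hstep
    rwa [abs_mul, abs_of_pos (by positivity : (0 : ℝ) < n + 1), mul_comm]

lemma exists_polynomial_near_of_lipschitzOnWith {f : ℝ → ℝ} {K : ℝ≥0} {a b B ε : ℝ} (hab : a < b)
    (hf : LipschitzOnWith K f (Set.Icc a b)) (hB : ∀ x ∈ Set.Icc a b, |f x| ≤ B) (hε : 0 < ε) :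
    ∃ p : ℝ[X], ∀ x ∈ Set.Icc a b,
      |p.eval x - f x| ≤ ε ∧ |p.eval x| ≤ B ∧ |p.derivative.eval x| ≤ K := by
  have hba : 0 < b - a := sub_pos.2 hab
  let rescale (t : ℝ) : ℝ := a + (b - a) * t
  have hmaps : Set.MapsTo rescale (Set.Icc 0 1) (Set.Icc a b) := fun t ht =>
    ⟨by nlinarith [ht.1], by nlinarith [ht.2]⟩
  have hrescale : LipschitzWith (b - a).toNNReal rescale :=
    LipschitzWith.of_dist_le_mul fun s t => by
      rw [Real.coe_toNNReal _ hba.le, dist_add_left, Real.dist_eq, Real.dist_eq, ← mul_sub,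
        abs_mul, abs_of_pos hba]
  obtain ⟨p, hp⟩ := exists_polynomial_near_of_lipschitzOnWith_Icc_zero_one
    (hf.comp hrescale.lipschitzOnWith hmaps) (fun t ht => hB _ (hmaps ht)) hε
  refine ⟨p.comp (C (b - a)⁻¹ * (X - C a)), fun x hx => ?_⟩
  have ht : (b - a)⁻¹ * (x - a) ∈ Set.Icc (0 : ℝ) 1 := by
    rw [inv_mul_eq_div]
    exact ⟨div_nonneg (sub_nonneg.2 hx.1) hba.le,
      div_le_one_of_le₀ (sub_le_sub_right hx.2 a) hba.le⟩
  have hx' : rescale ((b - a)⁻¹ * (x - a)) = x := by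
    simp only [rescale, mul_inv_cancel_left₀ hba.ne', add_sub_cancel]
  obtain ⟨hnear, hbound, hderiv⟩ := hp _ ht
  rw [Function.comp_apply, hx'] at hnear
  refine ⟨by simpa using hnear, by simpa using hbound, ?_⟩
  rw [NNReal.coe_mul, Real.coe_toNNReal _ hba.le] at hderiv
  simp only [derivative_comp, eval_mul, eval_comp, derivative_C_mul, derivative_sub, derivative_X,
    derivative_C, eval_sub, eval_C, eval_X, sub_zero, mul_one]
  rwa [abs_mul, abs_of_pos (inv_pos.2 hba), inv_mul_le_iff₀ hba, mul_comm (b - a)]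

end Bernstein

section KernelPolynomial
open Polynomial
variable {ι : Type*} [Fintype ι]

/-- The matrix polynomial `M ↦ (M *ᵥ w) i`. -/
noncomputable def mulVecForm (w : ι → ℝ) (i : ι) : MvPolynomial (ι × ι) ℝ :=
  ∑ j, w j • MvPolynomial.X (i, j)

lemma evalMatrix_mulVecForm (M : Matrix ι ι ℝ) (w : ι → ℝ) (i : ι) :
    evalMatrix M (mulVecForm w i) = (M *ᵥ w) i := by
  simp [mulVecForm, evalMatrix_X, mulVec, dotProduct, mul_comm]

/-- The matrix polynomial `M ↦ ∑ i ∈ s, p ((M *ᵥ w) i) * p ((M *ᵥ w') i)`. -/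
noncomputable def kernelPolynomial (p : ℝ[X]) (s : Finset ι) (w w' : ι → ℝ) :
    MvPolynomial (ι × ι) ℝ :=
  ∑ i ∈ s, aeval (mulVecForm w i) p * aeval (mulVecForm w' i) p

lemma evalMatrix_aeval_mulVecForm (M : Matrix ι ι ℝ) (p : ℝ[X]) (w : ι → ℝ) (i : ι) :
    evalMatrix M (aeval (mulVecForm w i) p) = p.eval ((M *ᵥ w) i) := by
  rw [← aeval_algHom_apply, evalMatrix_mulVecForm, coe_aeval_eq_eval]

lemma evalMatrix_kernelPolynomial (M : Matrix ι ι ℝ) (p : ℝ[X]) (s : Finset ι) (w w' : ι → ℝ) :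
    evalMatrix M (kernelPolynomial p s w w') =
      ∑ i ∈ s, p.eval ((M *ᵥ w) i) * p.eval ((M *ᵥ w') i) := by
  simp only [kernelPolynomial, map_sum, map_mul, evalMatrix_aeval_mulVecForm]

lemma sum_sq_mul_sub_mul_swap_le (u x : ι → ℝ) :
    ∑ a, ∑ b, (u a * x b - u b * x a) ^ 2 ≤ 2 * ((u ⬝ᵥ u) * (x ⬝ᵥ x)) := by
  have lagrange : ∑ a, ∑ b, (u a * x b - u b * x a) ^ 2 =
      2 * ((u ⬝ᵥ u) * (x ⬝ᵥ x)) - 2 * (u ⬝ᵥ x) ^ 2 := by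
    have expand (a b : ι) : (u a * x b - u b * x a) ^ 2 =
        u a * u a * (x b * x b) + x a * x a * (u b * u b) - 2 * (u a * x a * (u b * x b)) := by
      ring
    simp only [expand, Finset.sum_sub_distrib, Finset.sum_add_distrib, ← Finset.mul_sum,
      ← Finset.sum_mul, dotProduct]
    ring
  linarith [sq_nonneg (u ⬝ᵥ x)]

variable [DecidableEq ι]

lemma mulVec_dotProduct_mulVec {M : Matrix ι ι ℝ} (hM : M ∈ specialOrthogonalGroup ι ℝ)
    (w : ι → ℝ) : (M *ᵥ w) ⬝ᵥ (M *ᵥ w) = w ⬝ᵥ w := by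
  rw [dotProduct_mulVec, vecMul_mulVec,
    (mem_orthogonalGroup_iff' ι ℝ).1 (mem_specialOrthogonalGroup_iff.1 hM).1, vecMul_one]

lemma mulVec_mem_Icc {M : Matrix ι ι ℝ} (hM : M ∈ specialOrthogonalGroup ι ℝ) {w : ι → ℝ} {R : ℝ}
    (hR : 0 ≤ R) (hw : w ⬝ᵥ w ≤ R ^ 2) (i : ι) : (M *ᵥ w) i ∈ Set.Icc (-R) R := by
  refine abs_le.1 (abs_le_of_sq_le_sq ?_ hR)
  calc (M *ᵥ w) i ^ 2 ≤ (M *ᵥ w) ⬝ᵥ (M *ᵥ w) := by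
        simp only [dotProduct, ← pow_two]
        exact Finset.single_le_sum (f := fun j => (M *ᵥ w) j ^ 2) (fun j _ => sq_nonneg _)
          (Finset.mem_univ i)
    _ ≤ R ^ 2 := by rwa [mulVec_dotProduct_mulVec hM]

lemma rotationDerivation_mulVecForm (w : ι → ℝ) (a b i : ι) :
    rotationDerivation a b (mulVecForm w i) =
      (if i = a then mulVecForm w b else 0) - (if i = b then mulVecForm w a else 0) := by
  have hmul (A : Matrix ι ι ℝ) : matrixDerivation A (mulVecForm w i) =
      ∑ k, A i k • mulVecForm w k := by
    simp only [mulVecForm, map_sum, Derivation.map_smul, matrixDerivation_X, Finset.smul_sum,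
      smul_comm (w _)]
    exact Finset.sum_comm
  rw [rotationDerivation, hmul]
  simp only [planeGenerator, Matrix.sub_apply, single_apply, sub_smul, Finset.sum_sub_distrib,
    ite_and, ite_smul, one_smul, zero_smul, Finset.sum_ite_irrel, Finset.sum_ite_eq,
    Finset.mem_univ, if_true, Finset.sum_const_zero, eq_comm (b := i)]

/-- The gradient in `x` of `∑ i ∈ s, p (x i) * p (y i)`. -/
noncomputable def kernelGradient (p : ℝ[X]) (s : Finset ι) (x y : ι → ℝ) (i : ι) : ℝ :=
  if i ∈ s then p.derivative.eval (x i) * p.eval (y i) else 0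

lemma evalMatrix_rotationDerivation_kernelPolynomial (M : Matrix ι ι ℝ) (p : ℝ[X]) (s : Finset ι)
    (w w' : ι → ℝ) (a b : ι) :
    evalMatrix M (rotationDerivation a b (kernelPolynomial p s w w')) =
      (kernelGradient p s (M *ᵥ w) (M *ᵥ w') a * (M *ᵥ w) b -
        kernelGradient p s (M *ᵥ w) (M *ᵥ w') b * (M *ᵥ w) a) +
      (kernelGradient p s (M *ᵥ w') (M *ᵥ w) a * (M *ᵥ w') b -
        kernelGradient p s (M *ᵥ w') (M *ᵥ w) b * (M *ᵥ w') a) := by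
  simp only [kernelPolynomial, map_sum, Derivation.leibniz, Derivation.map_aeval,
    rotationDerivation_mulVecForm, smul_eq_mul, map_add, map_mul, map_sub,
    apply_ite (evalMatrix M), map_zero, evalMatrix_aeval_mulVecForm, evalMatrix_mulVecForm,
    mul_sub, mul_ite, mul_zero, Finset.sum_add_distrib, Finset.sum_sub_distrib,
    Finset.sum_ite_eq', kernelGradient, ite_mul, zero_mul]
  split_ifs <;> ring

lemma kernelGradient_dotProduct_self_le {p : ℝ[X]} {B K : ℝ} {x y : ι → ℝ}
    (hB : ∀ i, |p.eval (y i)| ≤ B) (hK : ∀ i, |p.derivative.eval (x i)| ≤ K) (s : Finset ι) :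
    kernelGradient p s x y ⬝ᵥ kernelGradient p s x y ≤ s.card * (K * B) ^ 2 := by
  calc kernelGradient p s x y ⬝ᵥ kernelGradient p s x y
      = ∑ i ∈ s, (p.derivative.eval (x i) * p.eval (y i)) ^ 2 := by
        simp [dotProduct, kernelGradient, pow_two]
    _ ≤ ∑ i ∈ s, (K * B) ^ 2 := by
        refine Finset.sum_le_sum fun i _ => sq_le_sq.2 ?_
        rw [abs_mul]
        exact (mul_le_mul (hK i) (hB i) (abs_nonneg _) ((abs_nonneg _).trans (hK i))).trans
          (le_abs_self _)
    _ = s.card * (K * B) ^ 2 := by rw [Finset.sum_const, nsmul_eq_mul]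

lemma evalMatrix_carreDuChamp_kernelPolynomial_le {p : ℝ[X]} {B K R : ℝ} (hR : 0 ≤ R)
    (hB : ∀ x ∈ Set.Icc (-R) R, |p.eval x| ≤ B)
    (hK : ∀ x ∈ Set.Icc (-R) R, |p.derivative.eval x| ≤ K)
    (s : Finset ι) {w w' : ι → ℝ} (hw : w ⬝ᵥ w ≤ R ^ 2) (hw' : w' ⬝ᵥ w' ≤ R ^ 2)
    {M : Matrix ι ι ℝ} (hM : M ∈ specialOrthogonalGroup ι ℝ) :
    evalMatrix M (carreDuChamp (kernelPolynomial p s w w') (kernelPolynomial p s w w')) ≤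
      8 * s.card * (K * B * R) ^ 2 := by
  have hx := mulVec_mem_Icc hM hR hw
  have hy := mulVec_mem_Icc hM hR hw'
  rw [← mulVec_dotProduct_mulVec hM] at hw hw'
  set x := M *ᵥ w
  set y := M *ᵥ w'
  have wedge_le {u z : ι → ℝ} (hu : u ⬝ᵥ u ≤ s.card * (K * B) ^ 2) (hz : z ⬝ᵥ z ≤ R ^ 2) :
      ∑ a, ∑ b, (u a * z b - u b * z a) ^ 2 ≤ 2 * (s.card * (K * B * R) ^ 2) := by
    refine (sum_sq_mul_sub_mul_swap_le u z).trans ?_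
    rw [mul_pow _ R, ← mul_assoc (s.card : ℝ)]
    have hzz : 0 ≤ z ⬝ᵥ z := Finset.sum_nonneg fun i _ => mul_self_nonneg _
    gcongr
  have hxy := wedge_le (kernelGradient_dotProduct_self_le (fun i => hB _ (hy i))
    (fun i => hK _ (hx i)) s) hw
  have hyx := wedge_le (kernelGradient_dotProduct_self_le (fun i => hB _ (hx i))
    (fun i => hK _ (hy i)) s) hw'
  rw [evalMatrix_carreDuChamp_self, Fintype.sum_prod_type]
  simp only [evalMatrix_rotationDerivation_kernelPolynomial]
  calc _ ≤ _ := Finset.sum_le_sum fun a _ => Finset.sum_le_sum fun b _ => add_sq_le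
    _ ≤ 8 * s.card * (K * B * R) ^ 2 := by
        simp only [← Finset.mul_sum, Finset.sum_add_distrib]
        linarith

end KernelPolynomial

section Subgaussian
variable {Ω : Type*} [MeasurableSpace Ω] {μ : Measure Ω} {X : Ω → ℝ} {c : ℝ≥0}

lemma hasSubgaussianMGF_of_forall_abs_sub_le (hX : AEMeasurable X μ)
    (happrox : ∀ ε > 0, ∃ Y : Ω → ℝ, HasSubgaussianMGF Y c μ ∧ ∀ᵐ ω ∂μ, |X ω - Y ω| ≤ ε) :
    HasSubgaussianMGF X c μ := by
  have exp_le (t : ℝ) {x y ε : ℝ} (h : |x - y| ≤ ε) :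
      Real.exp (t * x) ≤ Real.exp (|t| * ε) * Real.exp (t * y) := by
    rw [← Real.exp_add, Real.exp_le_exp, ← sub_le_iff_le_add, ← mul_sub]
    calc t * (x - y) ≤ |t| * |x - y| := (le_abs_self _).trans_eq (abs_mul _ _)
      _ ≤ |t| * ε := by gcongr
  have hint (t : ℝ) : Integrable (fun ω => Real.exp (t * X ω)) μ := by
    obtain ⟨Y, hY, hXY⟩ := happrox 1 one_pos
    refine ((hY.integrable_exp_mul t).const_mul (Real.exp (|t| * 1))).mono'
      (hX.const_mul t).exp.aestronglyMeasurable ?_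
    filter_upwards [hXY] with ω hω
    rw [Real.norm_of_nonneg (Real.exp_nonneg _)]
    exact exp_le t hω
  refine ⟨hint, fun t => ?_⟩
  have hlim : Filter.Tendsto (fun ε : ℝ => Real.exp (|t| * ε) * Real.exp (c * t ^ 2 / 2))
      (nhdsWithin 0 (Set.Ioi 0)) (nhds (Real.exp (c * t ^ 2 / 2))) := by
    have hcont : Continuous fun ε : ℝ => Real.exp (|t| * ε) * Real.exp (c * t ^ 2 / 2) := by
      fun_prop
    simpa using (hcont.tendsto 0).mono_left nhdsWithin_le_nhds
  refine ge_of_tendsto hlim (eventually_mem_nhdsWithin.mono fun ε hε => ?_)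
  obtain ⟨Y, hY, hXY⟩ := happrox ε hε
  calc mgf X μ t ≤ ∫ ω, Real.exp (|t| * ε) * Real.exp (t * Y ω) ∂μ :=
        integral_mono_ae (hint t) ((hY.integrable_exp_mul t).const_mul _)
          (hXY.mono fun ω hω => exp_le t hω)
    _ = Real.exp (|t| * ε) * mgf Y μ t := integral_const_mul _ _
    _ ≤ Real.exp (|t| * ε) * Real.exp (c * t ^ 2 / 2) := by
        gcongr
        exact hY.mgf_le t

lemma measure_le_abs_le_of_hasSubgaussianMGF [IsFiniteMeasure μ] (hX : HasSubgaussianMGF X c μ)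
    {r : ℝ} (hr : 0 ≤ r) :
    μ {ω | r ≤ |X ω|} ≤ ENNReal.ofReal (2 * Real.exp (-r ^ 2 / (2 * c))) := by
  rw [← ofReal_measureReal]
  refine ENNReal.ofReal_le_ofReal ?_
  calc μ.real {ω | r ≤ |X ω|} = μ.real ({ω | r ≤ X ω} ∪ {ω | r ≤ (-X) ω}) := by
        simp only [le_abs, Set.ofPred_or, Pi.neg_apply]
    _ ≤ μ.real {ω | r ≤ X ω} + μ.real {ω | r ≤ (-X) ω} := measureReal_union_le _ _
    _ ≤ 2 * Real.exp (-r ^ 2 / (2 * c)) := by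
        linarith [hX.measure_ge_le hr, hX.neg.measure_ge_le hr]

lemma ae_abs_sub_integral_sub_le [IsProbabilityMeasure μ] {Y : Ω → ℝ} {δ : ℝ}
    (hX : Integrable X μ) (hY : Integrable Y μ) (h : ∀ᵐ ω ∂μ, |X ω - Y ω| ≤ δ) :
    ∀ᵐ ω ∂μ, |(X ω - μ[X]) - (Y ω - μ[Y])| ≤ 2 * δ := by
  have hmean : |μ[X] - μ[Y]| ≤ δ := by
    rw [← integral_sub hX hY]
    simpa using norm_integral_le_of_norm_le_const (f := fun ω => X ω - Y ω) h
  filter_upwards [h] with ω hω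
  rw [sub_sub_sub_comm, two_mul]
  exact (abs_sub _ _).trans (add_le_add hω hmean)

end Subgaussian

section Kernel
lemma abs_sum_mul_sub_sum_mul_le {ι : Type*} (s : Finset ι) {x y x' y' : ι → ℝ} {B δ : ℝ}
    (hx : ∀ i, |x i| ≤ B) (hy' : ∀ i, |y' i| ≤ B) (hxx' : ∀ i, |x' i - x i| ≤ δ)
    (hyy' : ∀ i, |y' i - y i| ≤ δ) :
    |∑ i ∈ s, x i * y i - ∑ i ∈ s, x' i * y' i| ≤ s.card * (2 * B * δ) := by
  rw [← Finset.sum_sub_distrib, ← nsmul_eq_mul]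
  refine (Finset.abs_sum_le_sum_abs _ _).trans (Finset.sum_le_card_nsmul _ _ _ fun i _ => ?_)
  calc |x i * y i - x' i * y' i| = |x i * (y' i - y i) + (x' i - x i) * y' i| := by
        rw [← abs_neg]; ring_nf
    _ ≤ |x i| * |y' i - y i| + |x' i - x i| * |y' i| := by
        simpa only [abs_mul] using abs_add_le (x i * (y' i - y i)) ((x' i - x i) * y' i)
    _ ≤ B * δ + δ * B := by
        have hB : 0 ≤ B := (abs_nonneg _).trans (hx i)
        have hδ : 0 ≤ δ := (abs_nonneg _).trans (hxx' i)
        gcongr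
        exacts [hx i, hyy' i, hxx' i, hy' i]
    _ = 2 * B * δ := by ring

variable {n : ℕ} {μ : Measure (Matrix (Fin n) (Fin n) ℝ)} {φ : ℝ → ℝ} {K : ℝ≥0} {B : ℝ}

lemma IsHaarSO.hasSubgaussianMGF_sum_mul (hμ : IsHaarSO n μ) (hn : 3 ≤ n)
    (hφ : LipschitzWith K φ) (hB : ∀ x, |φ x| ≤ B) {R : ℝ} (hR : 0 < R) (s : Finset (Fin n))
    {w w' : Fin n → ℝ} (hw : w ⬝ᵥ w ≤ R ^ 2) (hw' : w' ⬝ᵥ w' ≤ R ^ 2) {c : ℝ≥0}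
    (hc : 8 * s.card * (K * B * R) ^ 2 ≤ ((n : ℝ) - 2) * c) :
    HasSubgaussianMGF (fun M => ∑ i ∈ s, φ ((M *ᵥ w) i) * φ ((M *ᵥ w') i) -
      ∫ N, ∑ i ∈ s, φ ((N *ᵥ w) i) * φ ((N *ᵥ w') i) ∂μ) c μ := by
  have : IsProbabilityMeasure μ := hμ.1
  have hB0 : 0 ≤ B := (abs_nonneg _).trans (hB 0)
  have hcont : Continuous fun M : Matrix (Fin n) (Fin n) ℝ =>
      ∑ i ∈ s, φ ((M *ᵥ w) i) * φ ((M *ᵥ w') i) := by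
    have := hφ.continuous
    fun_prop
  refine hasSubgaussianMGF_of_forall_abs_sub_le (hcont.aemeasurable.sub_const _) fun ε hε => ?_
  let δ := ε / (4 * s.card * B + 1)
  have hδ : 2 * (s.card * (2 * B * δ)) ≤ ε := by
    calc 2 * (s.card * (2 * B * δ)) = 4 * s.card * B * δ := by ring
      _ ≤ (4 * s.card * B + 1) * δ := by gcongr; linarith
      _ = ε := mul_div_cancel₀ _ (by positivity)
  obtain ⟨p, hp⟩ := exists_polynomial_near_of_lipschitzOnWith (neg_lt_self hR)
    hφ.lipschitzOnWith (fun x _ => hB x) (by positivity : 0 < δ)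
  refine ⟨_, hμ.hasSubgaussianMGF_evalMatrix hn fun M hM =>
    (evalMatrix_carreDuChamp_kernelPolynomial_le hR.le (fun x hx => (hp x hx).2.1)
      (fun x hx => (hp x hx).2.2) s hw hw' hM).trans hc, ?_⟩
  refine (ae_abs_sub_integral_sub_le (hμ.integrable hcont)
    (hμ.integrable (continuous_evalMatrix _)) ?_).mono fun M hM => hM.trans hδ
  filter_upwards [hμ.ae_mem] with M hM
  have hpw (i : Fin n) := hp _ (mulVec_mem_Icc hM hR.le hw i)
  have hpw' (i : Fin n) := hp _ (mulVec_mem_Icc hM hR.le hw' i)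
  rw [evalMatrix_kernelPolynomial]
  exact abs_sum_mul_sub_sum_mul_le s (fun i => hB _) (fun i => (hpw' i).2.1)
    (fun i => (hpw i).1) fun i => (hpw' i).1

/-- The vector `w : Fin n → ℝ` for which `M *ᵥ w` extends `suoOfHaar hm hk M *ᵥ v`. -/
noncomputable def suoInput {k : ℕ} (hk : k ≤ n) (v : Fin k → ℝ) : Fin n → ℝ :=
  √((n : ℝ) / k) • Function.extend (Fin.castLE hk) v 0

lemma dotProduct_extend {m ι : Type*} [Fintype m] [Fintype ι] {e : m → ι}
    (he : Function.Injective e) (u : ι → ℝ) (v : m → ℝ) :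
    u ⬝ᵥ Function.extend e v 0 = (u ∘ e) ⬝ᵥ v := by
  refine (Fintype.sum_of_injective e he _ _ (fun i hi => ?_) fun j => ?_).symm
  · rw [Function.extend_apply' _ _ _ hi, Pi.zero_apply, mul_zero]
  · rw [he.extend_apply, Function.comp_apply]

lemma suoInput_dotProduct_self_le {k : ℕ} (hk : k ≤ n) (hk0 : 0 < k) {v : Fin k → ℝ}
    (hv : v ⬝ᵥ v ≤ k) : suoInput hk v ⬝ᵥ suoInput hk v ≤ √n ^ 2 := by
  have hinj := Fin.castLE_injective hk
  have hcomp : Function.extend (Fin.castLE hk) v 0 ∘ Fin.castLE hk = v :=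
    funext fun j => hinj.extend_apply v 0 j
  rw [suoInput, smul_dotProduct, dotProduct_smul, smul_smul, Real.mul_self_sqrt (by positivity),
    dotProduct_extend hinj, hcomp, smul_eq_mul, Real.sq_sqrt n.cast_nonneg, div_mul_eq_mul_div,
    div_le_iff₀ (by exact_mod_cast hk0)]
  gcongr

lemma suoOfHaar_mulVec {m k : ℕ} (hm : m ≤ n) (hk : k ≤ n) (M : Matrix (Fin n) (Fin n) ℝ)
    (v : Fin k → ℝ) (i : Fin m) :
    (suoOfHaar hm hk M *ᵥ v) i = (M *ᵥ suoInput hk v) (Fin.castLE hm i) := by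
  rw [suoOfHaar, smul_mulVec, suoInput, mulVec_smul, Pi.smul_apply, Pi.smul_apply, mulVec, mulVec,
    dotProduct_extend (Fin.castLE_injective hk)]
  rfl

lemma kernelF_suoOfHaar {m k : ℕ} (hm : m ≤ n) (hk : k ≤ n) (M : Matrix (Fin n) (Fin n) ℝ)
    (v v' : Fin k → ℝ) :
    kernelF φ (suoOfHaar hm hk M) v v' =
      (m : ℝ)⁻¹ * ∑ i ∈ Finset.univ.map (Fin.castLEEmb hm),
        φ ((M *ᵥ suoInput hk v) i) * φ ((M *ᵥ suoInput hk v') i) := by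
  simp only [kernelF, suoOfHaar_mulVec, Finset.sum_map, Fin.coe_castLEEmb, div_eq_inv_mul]

lemma IsHaarSO.hasSubgaussianMGF_kernelF (hμ : IsHaarSO n μ) (hn : 3 ≤ n) {m k : ℕ} (hm : m ≤ n)
    (hk : k ≤ n) (hm0 : 0 < m) (hk0 : 0 < k) (hφ : LipschitzWith K φ) (hB : ∀ x, |φ x| ≤ B)
    {v v' : Fin k → ℝ} (hv : v ⬝ᵥ v ≤ k) (hv' : v' ⬝ᵥ v' ≤ k) {c : ℝ≥0}
    (hc : 8 * n * (K * B) ^ 2 ≤ m * ((n : ℝ) - 2) * c) :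
    HasSubgaussianMGF (fun M => kernelF φ (suoOfHaar hm hk M) v v' -
      ∫ N, kernelF φ (suoOfHaar hm hk N) v v' ∂μ) c μ := by
  have hn0 : 0 < n := by lia
  have hsum := (hμ.hasSubgaussianMGF_sum_mul hn hφ hB (Real.sqrt_pos.2 (Nat.cast_pos.2 hn0))
    (Finset.univ.map (Fin.castLEEmb hm)) (suoInput_dotProduct_self_le hk hk0 hv)
    (suoInput_dotProduct_self_le hk hk0 hv') (c := m ^ 2 * c) ?_).const_mul (m : ℝ)⁻¹
  · simp only [kernelF_suoOfHaar, integral_const_mul, ← mul_sub]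
    convert hsum using 1
    ext
    change (c : ℝ) = (m : ℝ)⁻¹ ^ 2 * ((m : ℝ) ^ 2 * c)
    field_simp
  · rw [Finset.card_map, Finset.card_univ, Fintype.card_fin, mul_pow, Real.sq_sqrt n.cast_nonneg,
      NNReal.coe_mul, NNReal.coe_pow, NNReal.coe_natCast]
    calc 8 * (m : ℝ) * ((K * B) ^ 2 * n) = m * (8 * n * (K * B) ^ 2) := by ring
      _ ≤ m * (m * ((n : ℝ) - 2) * c) := by gcongr
      _ = ((n : ℝ) - 2) * (m ^ 2 * c) := by ring

end Kernel

theorem so_kernel_concentration_general {m k n : ℕ} (hm : m ≤ n) (hk : k ≤ n) (hm0 : 0 < m)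
    (hk0 : 0 < k) (hn : 3 ≤ n) {φ : ℝ → ℝ} {K : ℝ≥0} {B : ℝ} (hφ : LipschitzWith K φ)
    (hB : ∀ x, |φ x| ≤ B) {v v' : Fin k → ℝ} (hv : v ⬝ᵥ v ≤ k) (hv' : v' ⬝ᵥ v' ≤ k)
    {μ : Measure (Matrix (Fin n) (Fin n) ℝ)} (hμ : IsHaarSO n μ) {r : ℝ} (hr : 0 ≤ r) :
    μ {M | r ≤ |kernelF φ (suoOfHaar hm hk M) v v' -
        ∫ N, kernelF φ (suoOfHaar hm hk N) v v' ∂μ|} ≤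
      ENNReal.ofReal (2 * Real.exp (-(r ^ 2 * ((n : ℝ) - 2) * m) / (16 * n * (K * B) ^ 2))) := by
  have : IsProbabilityMeasure μ := hμ.1
  have hn2 : 0 < (n : ℝ) - 2 := by
    rw [sub_pos]; exact_mod_cast hn
  let c : ℝ≥0 := (8 * n * (K * B) ^ 2 / (m * ((n : ℝ) - 2))).toNNReal
  have hc : (c : ℝ) = 8 * n * (K * B) ^ 2 / (m * ((n : ℝ) - 2)) :=
    Real.coe_toNNReal _ (by positivity)
  have hexp : -r ^ 2 / (2 * (c : ℝ)) =
      -(r ^ 2 * ((n : ℝ) - 2) * m) / (16 * n * (K * B) ^ 2) := by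
    rw [hc, mul_div_assoc', div_div_eq_mul_div]
    ring
  rw [← hexp]
  refine measure_le_abs_le_of_hasSubgaussianMGF
    (hμ.hasSubgaussianMGF_kernelF hn hm hk hm0 hk0 hφ hB hv hv' ?_) hr
  rw [hc, mul_div_cancel₀ _ (by positivity)]

/-- **Lemma (concentration step).** For differentiable `φ` with `‖φ‖_∞, ‖φ'‖_∞ ≤ C`,
`n = max k m ≥ 3`, `v, v'` with `‖v‖² = ‖v'‖² = k`, and `M` Haar-distributed on
`SO(n)`, with `V = √(n/k)·M₀` (`M₀` the top-left `m × k` submatrix of `M`) and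
`g(x,x') = (1/m) φ(x)ᵀφ(x')`, for every `r ≥ 0` we have
`P(|g(Vv, Vv') - E[g(Vv, Vv')]| ≥ r) ≤ 2 exp(-r²(n-2)m/(32nC⁴))`. -/
theorem so_kernel_concentration (m k : ℕ) (hm : 0 < m) (hk : 0 < k)
    (hn : 3 ≤ max k m)
    (φ : ℝ → ℝ) (C : ℝ) (hφdiff : Differentiable ℝ φ)
    (hφ : ∀ x, |φ x| ≤ C) (hφ' : ∀ x, |deriv φ x| ≤ C)
    (v v' : Fin k → ℝ) (hv : v ⬝ᵥ v = (k : ℝ)) (hv' : v' ⬝ᵥ v' = (k : ℝ))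
    (μ : Measure (Matrix (Fin (max k m)) (Fin (max k m)) ℝ))
    (hμ : IsHaarSO (max k m) μ) :
    ∀ r : ℝ, 0 ≤ r →
      μ {M | r ≤ |kernelF φ (suoOfHaar (le_max_right k m) (le_max_left k m) M) v v' -
          ∫ M', kernelF φ (suoOfHaar (le_max_right k m) (le_max_left k m) M') v v' ∂μ|} ≤
        ENNReal.ofReal (2 * Real.exp
          (-(r ^ 2 * (((max k m : ℕ) : ℝ) - 2) * (m : ℝ)) /
            (32 * ((max k m : ℕ) : ℝ) * C ^ 4))) := by
  intro r hr
  have hC : 0 ≤ C := (abs_nonneg _).trans (hφ 0)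
  have hlip : LipschitzWith ⟨C, hC⟩ φ := lipschitzWith_of_nnnorm_deriv_le hφdiff hφ'
  have hn2 : 0 ≤ ((max k m : ℕ) : ℝ) - 2 := by
    rw [sub_nonneg]
    exact_mod_cast (by lia : 2 ≤ max k m)
  have hexponent {a b : ℝ} (ha : 0 ≤ a) (hb : 0 ≤ b) :
      -a / (16 * b * (C * C) ^ 2) ≤ -a / (32 * b * C ^ 4) := by
    have hnonneg : 0 ≤ a / (32 * b * C ^ 4) := by positivity
    calc -a / (16 * b * (C * C) ^ 2) = 2 * -(a / (32 * b * C ^ 4)) := by ring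
      _ ≤ -a / (32 * b * C ^ 4) := by linarith [neg_div (32 * b * C ^ 4) a]
  refine (so_kernel_concentration_general _ _ hm hk hn hlip hφ hv.le hv'.le hμ hr).trans ?_
  refine ENNReal.ofReal_le_ofReal ?_
  gcongr 2 * Real.exp ?_
  exact hexponent (by positivity) (by positivity)
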